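/- arXiv:1508.01251 — 7 statements merged into one kernel-verified Lean document; each statement's English description precedes it below -/
import Mathlib

section
/- Let 𝕜 be an algebraically closed field of characteristic zero and let G be a finite group. If G faithfully grades some division ring D which is a 𝕜-algebra of degree r over its center Z(D) (i.e. dim_{Z(D)} D = r²), then for every positive integer n, G faithfully grades some division ring D' which is a 𝕜-algebra of degree rn over its center. -/
/-!
The ring `D'` is an iterated twisted Laurent series ring `D((x))((y))` in which `x` and `y` commute
with `D` and commute with each other up to a primitive `n`-th root of unity of `𝕜`.  Its center is
the field of Laurent series in `x ^ n`, `y ^ n` over the center of `D`, which gives the factor `n²`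
in the dimension, and it is graded by `G` through the coefficients.

To avoid building a twisted multiplication by hand, `D'` is realised as a subalgebra of ordinary
Hahn series over `Γ = ℤ × ℤ` (lexicographic order) with coefficients in the `n × n` matrices over
`D`: the coefficient at `γ` has to be of the form `d * e (γ mod n)`, where the `e q`,
`q ∈ (ℤ/n)²`, are the clock-and-shift matrices, whose products are `e q * e q' = c q q' * e (q + q')`
for a scalar cocycle `c` with nondegenerate commutator (`TwistData`, `clockShift`).

* `TwistData.isDomain_alg`: leading coefficients multiply to something nonzero, so `D'` is a domain.
* `TwistData.phi`, `TwistData.exists_basis`: with `Z` the center of `D`, the field `Z⟦Γ⟧` embeds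
  centrally in `D'` by `t^γ ↦ t^(nγ)`, and `D'` has dimension `n² * dim_Z D` over it.  A domain
  that is finite over a central field is a division ring.
* `TwistData.mem_range_phi`: nondegeneracy of the cocycle shows that the image of this field is the
  whole center.
* `TwistData.comp`: the component of degree `g` consists of the series with coefficients in
  `Dg g`; finiteness of `G` makes these components span.

When `r = 0`, `D` is infinite-dimensional over its center, and `D` itself serves as `D'`.
-/

open HahnSeries

/-! ### Twisted Hahn series -/

/-- A system of twisted coordinates, indexed by an abelian group `Q`, for a division ring `D`
inside a ring `M`: a copy `L q` of `D` in `M` for every `q`, where `L q d` plays the role of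
`d * e q` for invertible elements `e q` of `M` that commute with `D` and satisfy
`e q * e q' = c q q' * e (q + q')` with a scalar 2-cocycle `c`.  The field `nondeg` says that the
commutator pairing of the cocycle is nondegenerate. -/
structure TwistData (𝕜 D M Q : Type) [Field 𝕜] [DivisionRing D] [Algebra 𝕜 D] [Ring M]
    [Algebra 𝕜 M] [AddCommGroup Q] where
  /-- The embedding `d ↦ d * e q`. -/
  L : Q → D →ₗ[𝕜] M
  /-- The cocycle. -/
  c : Q → Q → 𝕜
  inj : ∀ q, Function.Injective (L q)
  mul : ∀ q q' d d', L q d * L q' d' = L (q + q') (c q q' • (d * d'))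
  one : L 0 1 = 1
  c_ne : ∀ q q', c q q' ≠ 0
  nondeg : ∀ q, (∀ q', c q q' = c q' q) → q = 0

namespace TwistData

variable {𝕜 D M Q Γ : Type} [Field 𝕜] [DivisionRing D] [Algebra 𝕜 D] [Ring M]
    [Algebra 𝕜 M] [AddCommGroup Q] [AddCommGroup Γ] [LinearOrder Γ] [IsOrderedAddMonoid Γ]
    (T : TwistData 𝕜 D M Q) (p : Γ →+ Q)

theorem zero_mul' (q : Q) (d d' : D) : T.L 0 d * T.L q d' = T.L q (d * d') := by
  have h := T.mul 0 q 1 1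
  rw [T.one, one_mul, zero_add, mul_one] at h
  have h1 := T.inj q h
  rw [T.mul, zero_add, ← one_mul (d * d'), ← smul_mul_assoc, ← h1, one_mul]

theorem mul_zero' (q : Q) (d d' : D) : T.L q d * T.L 0 d' = T.L q (d * d') := by
  have h := T.mul q 0 1 1
  rw [T.one, mul_one, add_zero, mul_one] at h
  have h1 := T.inj q h
  rw [T.mul, add_zero, ← one_mul (d * d'), ← smul_mul_assoc, ← h1, one_mul]

/-- Hahn series over `M` whose coefficient at `γ` lies in `V * e (p γ)`. -/
noncomputable def hsub (V : Submodule 𝕜 D) : Submodule 𝕜 M⟦Γ⟧ where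
  carrier := {f | ∀ γ, f.coeff γ ∈ V.map (T.L (p γ))}
  add_mem' hf hg γ := by
    rw [coeff_add]; exact add_mem (hf γ) (hg γ)
  zero_mem' γ := by simp
  smul_mem' a f hf γ := by
    rw [HahnSeries.coeff_smul]; exact Submodule.smul_mem _ _ (hf γ)

theorem hsub_mul_mem {V W : Submodule 𝕜 D} {f g : M⟦Γ⟧} (hf : f ∈ T.hsub p V)
    (hg : g ∈ T.hsub p W) : f * g ∈ T.hsub p (V * W) := by
  intro γ
  rw [coeff_mul]
  refine Submodule.sum_mem _ fun ij hij => ?_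
  obtain ⟨d, hd, h1⟩ := hf ij.1
  obtain ⟨d', hd', h2⟩ := hg ij.2
  rw [Finset.mem_antidiagonal] at hij
  rw [← h1, ← h2, T.mul, ← hij.2.2, map_add]
  exact ⟨_, Submodule.smul_mem _ _ (Submodule.mul_mem_mul hd hd'), rfl⟩

omit [IsOrderedAddMonoid Γ] in
theorem single_mem_hsub {V : Submodule 𝕜 D} (γ : Γ) {q : Q} (hq : p γ = q) {d : D}
    (hd : d ∈ V) : single γ (T.L q d) ∈ T.hsub p V := by
  intro δ
  rcases eq_or_ne δ γ with rfl | h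
  · rw [coeff_single_same, hq]; exact ⟨d, hd, rfl⟩
  · rw [coeff_single_of_ne h]; exact zero_mem _

/-- The twisted Hahn series ring: Hahn series over `M` with coefficient at `γ` in `D * e (p γ)`. -/
noncomputable def alg : Subalgebra 𝕜 M⟦Γ⟧ :=
  (T.hsub p ⊤).toSubalgebra
    (by
      rw [← single_zero_one, ← T.one]
      exact T.single_mem_hsub p 0 (map_zero p) trivial)
    (fun f g hf hg γ => Submodule.map_mono le_top (T.hsub_mul_mem p hf hg γ))

theorem exists_coeff (f : T.alg p) (γ : Γ) : ∃ d, T.L (p γ) d = (f : M⟦Γ⟧).coeff γ := by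
  obtain ⟨d, -, h⟩ := f.2 γ
  exact ⟨d, h⟩

/-- The homogeneous element `d * e q` placed in degree `γ`. -/
noncomputable def mono (γ : Γ) (q : Q) (hq : p γ = q) (d : D) : T.alg p :=
  ⟨single γ (T.L q d), T.single_mem_hsub p γ hq (V := ⊤) trivial⟩

theorem ext_coeff {f g : T.alg p} (h : ∀ γ, (f : M⟦Γ⟧).coeff γ = (g : M⟦Γ⟧).coeff γ) : f = g :=
  Subtype.ext (HahnSeries.ext (funext h))

theorem L_mul_ne_zero {q q' : Q} {d d' : D} (h : T.L q d ≠ 0) (h' : T.L q' d' ≠ 0) :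
    T.L q d * T.L q' d' ≠ 0 := by
  have hd : d ≠ 0 := by rintro rfl; exact h (map_zero _)
  have hd' : d' ≠ 0 := by rintro rfl; exact h' (map_zero _)
  rw [T.mul]
  exact (map_ne_zero_iff _ (T.inj _)).2 (smul_ne_zero (T.c_ne _ _) (mul_ne_zero hd hd'))

/-- Leading coefficients are invertible multiples of the `e q`, so their products do not vanish. -/
theorem isDomain_alg : IsDomain (T.alg p) := by
  have : NoZeroDivisors (T.alg p) := ⟨by
    intro f g hfg
    by_contra! hne
    have hf : (f : M⟦Γ⟧) ≠ 0 := fun h => hne.1 (Subtype.ext h)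
    have hg : (g : M⟦Γ⟧) ≠ 0 := fun h => hne.2 (Subtype.ext h)
    have h := coeff_mul_order_add_order (f : M⟦Γ⟧) (g : M⟦Γ⟧)
    have h0 : (f : M⟦Γ⟧) * g = 0 := congrArg Subtype.val hfg
    rw [h0, coeff_zero] at h
    have hf' := leadingCoeff_ne_zero.2 hf
    have hg' := leadingCoeff_ne_zero.2 hg
    rw [leadingCoeff_eq] at hf' hg'
    rw [leadingCoeff_eq, leadingCoeff_eq] at h
    obtain ⟨d, hd⟩ := T.exists_coeff p f (f : M⟦Γ⟧).order
    obtain ⟨d', hd'⟩ := T.exists_coeff p g (g : M⟦Γ⟧).order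
    rw [← hd] at hf' h
    rw [← hd'] at hg' h
    exact T.L_mul_ne_zero hf' hg' h.symm⟩
  have : Nontrivial (T.alg p) := ⟨T.mono p 0 0 (map_zero p) 1, 0, fun h => by
    have h1 := congrArg (fun f : T.alg p => (f : M⟦Γ⟧).coeff 0) h
    simp only [mono, coeff_single_same, ZeroMemClass.coe_zero, coeff_zero] at h1
    exact one_ne_zero (T.inj 0 (h1.trans (map_zero _).symm))⟩
  exact NoZeroDivisors.to_isDomain _

/-! ### The center -/

/-- `z ↦ z * e 0 = z`, on the center of `D`. -/
noncomputable def centerHom : Subring.center D →+* M where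
  toFun z := T.L 0 z
  map_one' := T.one
  map_mul' a b := by rw [T.zero_mul']; rfl
  map_zero' := map_zero _
  map_add' a b := by simp

variable {n : ℕ} (hn : 0 < n)

/-- Substitution `t^γ ↦ t^{nγ}` as a homomorphism from the Hahn series field over the center
of `D` to Hahn series over `M`. -/
noncomputable def phi0 : (Subring.center D)⟦Γ⟧ →+* M⟦Γ⟧ :=
  (embDomainRingHom (nsmulAddMonoidHom n) (nsmul_right_injective hn.ne')
    (fun _ _ => (nsmul_right_strictMono hn.ne').le_iff_le)).comp
  { toFun := fun x => x.map T.centerHom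
    map_one' := by
      ext γ
      rw [map_coeff, coeff_one, coeff_one]
      split_ifs <;> simp
    map_mul' := fun x y => HahnSeries.map_mul (T.centerHom : Subring.center D →ₙ+* M)
    map_zero' := by ext; simp
    map_add' := fun x y => by ext; simp }

theorem phi0_coeff (h : (Subring.center D)⟦Γ⟧) (γ : Γ) :
    (T.phi0 hn h).coeff (n • γ) = T.L 0 (h.coeff γ) := by
  exact embDomain_mk_coeff (f := fun γ : Γ => n • γ) _ _

theorem phi0_coeff_of_ne (h : (Subring.center D)⟦Γ⟧) (δ : Γ) (hδ : ∀ γ, δ ≠ n • γ) :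
    (T.phi0 hn h).coeff δ = 0 := by
  apply embDomain_of_notMem_range
  rintro ⟨γ, rfl⟩
  exact hδ γ rfl

theorem mul_comm_of_coeff {x y : M⟦Γ⟧} (h : ∀ γ δ, x.coeff γ * y.coeff δ = y.coeff δ * x.coeff γ) :
    x * y = y * x := by
  ext
  simp_rw [coeff_mul, h]
  exact Finset.sum_equiv (Equiv.prodComm _ _) (fun _ ↦ Finset.swap_mem_antidiagonal.symm) <|
    by simp

variable (hp : ∀ γ, p γ = 0 ↔ ∃ δ, γ = n • δ)

include hp in
theorem phi0_mem (h : (Subring.center D)⟦Γ⟧) : T.phi0 hn h ∈ T.alg p := by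
  intro γ
  by_cases hγ : ∃ δ, γ = n • δ
  · have h0 := (hp γ).2 hγ
    obtain ⟨δ, rfl⟩ := hγ
    rw [T.phi0_coeff, h0]
    exact ⟨_, trivial, rfl⟩
  · push Not at hγ
    rw [T.phi0_coeff_of_ne hn h γ hγ]
    exact zero_mem _

/-- The central embedding of the Hahn series field over the center of `D`. -/
noncomputable def phi : (Subring.center D)⟦Γ⟧ →+* T.alg p :=
  (T.phi0 hn).codRestrict (T.alg p) (T.phi0_mem p hn hp)

theorem phi_comm (h : (Subring.center D)⟦Γ⟧) (f : T.alg p) :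
    T.phi p hn hp h * f = f * T.phi p hn hp h := by
  apply Subtype.ext
  change T.phi0 hn h * (f : M⟦Γ⟧) = f * T.phi0 hn h
  apply mul_comm_of_coeff
  intro γ δ
  by_cases hγ : ∃ δ, γ = n • δ
  · obtain ⟨γ, rfl⟩ := hγ
    obtain ⟨d, hd⟩ := T.exists_coeff p f δ
    rw [T.phi0_coeff, ← hd, T.zero_mul', T.mul_zero']
    rw [Subring.mem_center_iff.1 (h.coeff γ).2 d]
  · push Not at hγ
    rw [T.phi0_coeff_of_ne hn h γ hγ, zero_mul, mul_zero]

/-- The series with coefficients `g (f_{nγ + s})`. -/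
noncomputable def pull (f : M⟦Γ⟧) (s : Γ) (g : M → Subring.center D) (hg : g 0 = 0) (hn : 0 < n) :
    (Subring.center D)⟦Γ⟧ where
  coeff γ := g (f.coeff (n • γ + s))
  isPWO_support' := by
    have hmono : StrictMono fun γ : Γ => n • γ + s := fun a b hab => by
      have := (nsmul_right_strictMono (M := Γ) hn.ne') hab
      simpa using this
    have : (Function.support fun γ => g (f.coeff (n • γ + s))) ⊆
        (fun γ : Γ => n • γ + s) ⁻¹' f.support := by
      intro γ hγ
      simp only [Function.mem_support, Set.mem_preimage, mem_support] at hγ ⊢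
      intro h0
      exact hγ (by rw [h0, hg])
    refine Set.IsPWO.mono ?_ this
    rw [Set.isPWO_iff_isWF]
    have hw := f.isWF_support
    rw [Set.isWF_iff_no_descending_seq] at hw ⊢
    intro u hu hmem
    exact hw _ (hmono.comp_strictAnti hu) fun k => hmem k

/-- A central series commutes with `D`, so its coefficients are central, and with all `e q`, so
its support lies in the kernel of `p` by nondegeneracy. -/
theorem mem_range_phi (hsurj : Function.Surjective p) (f : T.alg p)
    (hf : f ∈ Subring.center (T.alg p)) : ∃ h, T.phi p hn hp h = f := by
  classical
  rw [Subring.mem_center_iff] at hf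
  have hcoef : ∀ γ (d : D), T.L (p γ) d = (f : M⟦Γ⟧).coeff γ →
      d ∈ Subring.center D ∧ (d ≠ 0 → p γ = 0) := by
    intro γ d hd
    constructor
    · rw [Subring.mem_center_iff]
      intro x
      have h1 := congrArg (fun f : T.alg p => (f : M⟦Γ⟧).coeff γ)
        (hf (T.mono p 0 0 (map_zero p) x))
      simp only [mono, MulMemClass.coe_mul, coeff_single_zero_mul, coeff_mul_single_zero] at h1
      rw [← hd, T.zero_mul', T.mul_zero'] at h1
      exact T.inj _ h1
    · intro hd0
      apply T.nondeg
      intro q'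
      obtain ⟨δ, rfl⟩ := hsurj q'
      have h1 := congrArg (fun f : T.alg p => (f : M⟦Γ⟧).coeff (γ + δ))
        (hf (T.mono p δ (p δ) rfl 1))
      simp only [mono, MulMemClass.coe_mul, coeff_single_mul_add, coeff_mul_single_add] at h1
      rw [← hd, T.mul, T.mul, add_comm (p δ), one_mul, mul_one] at h1
      have h2 := T.inj _ h1
      exact (smul_left_injective 𝕜 hd0 h2).symm
  choose d hd using T.exists_coeff p f
  have hL0 : Function.Injective T.centerHom := fun a b h => Subtype.ext (T.inj 0 h)
  let g : M → Subring.center D := Function.invFun T.centerHom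
  have hg : ∀ z, g (T.centerHom z) = z := Function.leftInverse_invFun hL0
  refine ⟨pull (n := n) (f : M⟦Γ⟧) 0 g (by simpa using hg 0) hn, ?_⟩
  apply T.ext_coeff p
  intro γ
  change (T.phi0 hn _).coeff γ = _
  by_cases hγ : ∃ δ, γ = n • δ
  · have hpγ := (hp γ).2 hγ
    obtain ⟨δ, rfl⟩ := hγ
    rw [T.phi0_coeff]
    simp only [pull, add_zero]
    have h3 := hd (n • δ)
    rw [← h3]
    rw [hpγ]
    have h4 := hg ⟨d (n • δ), (hcoef _ _ (hd _)).1⟩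
    change g (T.L 0 (d (n • δ))) = _ at h4
    rw [h4]
  · have h0 : d γ = 0 := by
      by_contra h0
      exact hγ ((hp γ).1 ((hcoef _ _ (hd _)).2 h0))
    push Not at hγ
    rw [T.phi0_coeff_of_ne hn _ γ hγ, ← hd, h0, map_zero]

/-! ### Dimension over the center -/

/-- The algebra structure over the Hahn series field given by `phi`. -/
noncomputable abbrev phiAlgebra : Algebra (Subring.center D)⟦Γ⟧ (T.alg p) :=
  (T.phi p hn hp).toAlgebra' (T.phi_comm p hn hp)

include hn hp in
/-- For a basis `b` of `D` over its center and a section `s` of `p`, the elements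
`b k * e q * t^(s q)` form a basis over the Hahn series field over the center. -/
theorem exists_basis (hsurj : Function.Surjective p) [Fintype Q] {κ : Type} [Fintype κ]
    (b : Module.Basis κ (Subring.center D) D) :
    letI := T.phiAlgebra p hn hp
    Nonempty (((Q × κ) → (Subring.center D)⟦Γ⟧) ≃ₗ[(Subring.center D)⟦Γ⟧] T.alg p) := by
  classical
  let := T.phiAlgebra p hn hp
  obtain ⟨s, hs⟩ := hsurj.hasRightInverse
  let w : Q × κ → T.alg p := fun qk => T.mono p (s qk.1) qk.1 (hs _) (b qk.2)
  let Ψ := Fintype.linearCombination (Subring.center D)⟦Γ⟧ w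
  have key : ∀ (h : Q × κ → (Subring.center D)⟦Γ⟧) (q : Q) (γ : Γ),
      ((Ψ h : T.alg p) : M⟦Γ⟧).coeff (n • γ + s q) =
        T.L q (∑ k, (h (q, k)).coeff γ • b k) := by
    intro h q γ
    have e1 : Ψ h = ∑ qk, T.phi p hn hp (h qk) * w qk := rfl
    have e2 : ((Ψ h : T.alg p) : M⟦Γ⟧) =
        ∑ qk : Q × κ, T.phi0 hn (h qk) * single (s qk.1) (T.L qk.1 (b qk.2)) := by
      rw [e1, AddSubmonoidClass.coe_finsetSum]
      rfl
    rw [e2, coeff_sum, Fintype.sum_prod_type, Finset.sum_eq_single q]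
    · rw [map_sum]
      refine Finset.sum_congr rfl fun k _ => ?_
      rw [coeff_mul_single_add, T.phi0_coeff, T.zero_mul']
      rfl
    · intro q' _ hq'
      refine Finset.sum_eq_zero fun k _ => ?_
      rw [coeff_mul_single, T.phi0_coeff_of_ne, zero_mul]
      intro δ hδ
      have := (hp _).2 ⟨δ, hδ⟩
      rw [map_sub, map_add, (hp _).2 ⟨γ, rfl⟩, hs, hs, zero_add, sub_eq_zero] at this
      exact hq' this.symm
    · simp
  refine ⟨LinearEquiv.ofBijective Ψ ⟨?_, ?_⟩⟩
  · rw [injective_iff_map_eq_zero]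
    intro h hh
    ext1 ⟨q, k⟩
    ext γ
    have h1 := key h q γ
    rw [hh] at h1
    have h2 := T.inj q (((map_zero _).trans h1))
    have h3 := Fintype.linearIndependent_iff.1 b.linearIndependent
      (fun k => (h (q, k)).coeff γ) h2.symm k
    rw [h3]; rfl
  · intro f
    -- the coordinates of `f` are read off after inverting `L q`
    let g : Q → M → D := fun q => Function.invFun (T.L q)
    have hg : ∀ q d, g q (T.L q d) = d := fun q => Function.leftInverse_invFun (T.inj q)
    have hg0 : ∀ q k, b.repr (g q 0) k = 0 := fun q k => by
      have := hg q 0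
      rw [map_zero] at this
      rw [this]; simp
    refine ⟨fun qk => pull (n := n) (f : M⟦Γ⟧) (s qk.1) (fun m => b.repr (g qk.1 m) qk.2)
      (hg0 _ _) hn, ?_⟩
    apply T.ext_coeff p
    intro δ
    obtain ⟨γ, hγ⟩ := (hp (δ - s (p δ))).1 (by rw [map_sub, hs, sub_self])
    obtain ⟨d, hd⟩ := T.exists_coeff p f δ
    have hδ : δ = n • γ + s (p δ) := by rw [← hγ]; abel
    have h1 := key (fun qk => pull (n := n) (f : M⟦Γ⟧) (s qk.1)
      (fun m => b.repr (g qk.1 m) qk.2) (hg0 _ _) hn) (p δ) γ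
    rw [← hδ] at h1
    rw [h1]
    simp only [pull]
    rw [← hδ, ← hd, hg, b.sum_repr]

include hn hp in
/-- The twisted Hahn series ring, being a domain that is finite over a central field, is a division
ring; its dimension over its center is `|Q|` times that of `D`. -/
theorem exists_divisionRing (hsurj : Function.Surjective p) [Fintype Q] {κ : Type} [Fintype κ]
    (b : Module.Basis κ (Subring.center D) D) :
    (∃ I : DivisionRing (T.alg p), I.toRing = (T.alg p).toRing) ∧
      Module.finrank (Subring.center (T.alg p)) (T.alg p) = Fintype.card Q * Fintype.card κ := by
  let := T.phiAlgebra p hn hp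
  obtain ⟨e⟩ := T.exists_basis p hn hp hsurj b
  have := T.isDomain_alg p
  have : Module.Finite (Subring.center D)⟦Γ⟧ (T.alg p) := Module.Finite.equiv e
  refine ⟨⟨divisionRingOfFiniteDimensional (Subring.center D)⟦Γ⟧ (T.alg p), rfl⟩, ?_⟩
  have hc : ∀ x, T.phi p hn hp x ∈ Subring.center (T.alg p) := fun x => by
    rw [Subring.mem_center_iff]
    exact fun g => (T.phi_comm p hn hp x g).symm
  have hbij : Function.Bijective ((T.phi p hn hp).codRestrict (Subring.center (T.alg p)) hc) := by
    constructor
    · intro a b hab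
      exact (T.phi p hn hp).injective (congrArg Subtype.val hab)
    · rintro ⟨f, hf⟩
      obtain ⟨h, hh⟩ := T.mem_range_phi p hn hp hsurj f hf
      exact ⟨h, Subtype.ext hh⟩
  rw [← Fintype.card_prod, ← Module.finrank_pi (Subring.center D)⟦Γ⟧, e.finrank_eq]
  symm
  exact Algebra.finrank_eq_of_equiv_equiv (RingEquiv.ofBijective _ hbij) (RingEquiv.refl _)
    (by ext; rfl)

/-! ### The grading -/

section Grading

variable {G : Type} (Dg : G → Submodule 𝕜 D)

/-- The component of degree `g`: twisted series with all coefficients in `Dg g`. -/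
noncomputable def comp (g : G) : Submodule 𝕜 (T.alg p) :=
  (T.hsub p (Dg g)).comap (T.alg p).val.toLinearMap

theorem comp_indep (h : iSupIndep Dg) : iSupIndep (T.comp p Dg) := by
  rw [iSupIndep_iff_finsetSum_eq_zero_imp_eq_zero] at h ⊢
  intro s v hv hsum i hi
  apply T.ext_coeff p
  intro γ
  have hv' : ∀ j : s, ∃ d ∈ Dg j, T.L (p γ) d = ((v j : T.alg p) : M⟦Γ⟧).coeff γ :=
    fun j => hv j j.2 γ
  choose d hd hd' using hv'
  classical
  let d' : G → D := fun j => if hj : j ∈ s then d ⟨j, hj⟩ else 0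
  have e1 : ∀ j (hj : j ∈ s), d' j = d ⟨j, hj⟩ := fun j hj => dif_pos hj
  have e2 : ∑ j ∈ s, d' j = 0 := by
    apply T.inj (p γ)
    rw [map_zero, map_sum]
    have h1 := congrArg (fun f : T.alg p => (f : M⟦Γ⟧).coeff γ) hsum
    simp only [AddSubmonoidClass.coe_finsetSum, coeff_sum, ZeroMemClass.coe_zero,
      coeff_zero] at h1
    rw [← h1]
    exact Finset.sum_congr rfl fun j hj => by rw [e1 j hj, hd' ⟨j, hj⟩]
  have e3 := h s d' (fun j hj => by rw [e1 j hj]; exact hd ⟨j, hj⟩) e2 i hi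
  rw [← hd' ⟨i, hi⟩, ← e1 i hi, e3, map_zero]
  rfl

/-- Every coefficient is decomposed separately; as `G` is finite, this writes a series as a finite
sum of homogeneous series. -/
theorem comp_iSup [Finite G] (h : (⨆ g, Dg g) = ⊤) : (⨆ g, T.comp p Dg g) = ⊤ := by
  classical
  have := Fintype.ofFinite G
  have hdec : ∀ d : D, ∃ x : G → D, (∀ g, x g ∈ Dg g) ∧ ∑ g, x g = d := by
    intro d
    have hd : d ∈ ⨆ g, Dg g := h ▸ trivial
    obtain ⟨x, hx, hs⟩ := (Submodule.mem_iSup_iff_exists_finsupp ..).mp hd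
    exact ⟨x, hx, by rw [← hs, Finsupp.sum_fintype _ _ (fun _ => rfl)]⟩
  choose x hx hs using hdec
  rw [eq_top_iff]
  intro f _
  choose d hd using T.exists_coeff p f
  let F : G → M⟦Γ⟧ := fun g =>
    { coeff := fun γ => if (f : M⟦Γ⟧).coeff γ = 0 then 0 else T.L (p γ) (x (d γ) g)
      isPWO_support' := (f : M⟦Γ⟧).isPWO_support.mono fun γ hγ => by
        simp only [Function.mem_support] at hγ
        exact fun h0 => hγ (if_pos h0) }
  have hF : ∀ g γ, (F g).coeff γ ∈ (Dg g).map (T.L (p γ)) := by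
    intro g γ
    change (if (f : M⟦Γ⟧).coeff γ = 0 then 0 else T.L (p γ) (x (d γ) g)) ∈ _
    split_ifs
    · exact zero_mem _
    · exact ⟨_, hx _ _, rfl⟩
  let F' : G → T.alg p := fun g => ⟨F g, fun γ => Submodule.map_mono le_top (hF g γ)⟩
  have hfF : f = ∑ g, F' g := by
    apply T.ext_coeff p
    intro γ
    rw [AddSubmonoidClass.coe_finsetSum, coeff_sum]
    change _ = ∑ g, (if (f : M⟦Γ⟧).coeff γ = 0 then 0 else T.L (p γ) (x (d γ) g))
    split_ifs with h0
    · rw [h0, Finset.sum_const_zero]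
    · rw [← map_sum, hs, hd]
  rw [hfF]
  exact Submodule.sum_mem _ fun g _ => Submodule.mem_iSup_of_mem g (hF g)

theorem comp_ne_bot (h : ∀ g, Dg g ≠ ⊥) (g : G) : T.comp p Dg g ≠ ⊥ := by
  obtain ⟨d, hd, hd0⟩ := Submodule.exists_mem_ne_zero_of_ne_bot (h g)
  rw [Submodule.ne_bot_iff]
  refine ⟨T.mono p 0 0 (map_zero p) d, T.single_mem_hsub p 0 (map_zero p) hd, fun h0 => hd0 ?_⟩
  have h1 := congrArg (fun f : T.alg p => (f : M⟦Γ⟧).coeff 0) h0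
  simp only [mono, coeff_single_same, ZeroMemClass.coe_zero, coeff_zero] at h1
  exact T.inj 0 (h1.trans (map_zero _).symm)

/-- The inclusion `≥` multiplies `z` by an expression of `1` as an element of
`Dg g * Dg g⁻¹`. -/
theorem comp_mul [Group G] (h1 : (1 : D) ∈ Dg 1) (hmul : ∀ g h, Dg g * Dg h = Dg (g * h))
    (g h : G) : T.comp p Dg g * T.comp p Dg h = T.comp p Dg (g * h) := by
  apply le_antisymm
  · rw [Submodule.mul_le]
    intro f hf f' hf'
    have := T.hsub_mul_mem p (V := Dg g) (W := Dg h) hf hf'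
    rwa [hmul] at this
  · intro z hz
    have hmono : ∀ k (t : D), t ∈ Dg k → T.mono p 0 0 (map_zero p) t ∈ T.comp p Dg k :=
      fun k t ht => T.single_mem_hsub p 0 (map_zero p) ht
    have key : ∀ t ∈ Dg g * Dg g⁻¹, T.mono p 0 0 (map_zero p) t * z ∈
        T.comp p Dg g * T.comp p Dg h := by
      intro t ht
      induction ht using Submodule.mul_induction_on' with
      | mem_mul_mem a ha b hb =>
        have e : T.mono p 0 0 (map_zero p) (a * b) =
            T.mono p 0 0 (map_zero p) a * T.mono p 0 0 (map_zero p) b := by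
          apply Subtype.ext
          change single 0 (T.L 0 (a * b)) = single 0 (T.L 0 a) * single 0 (T.L 0 b)
          rw [single_mul_single, add_zero, T.zero_mul']
        rw [e, mul_assoc]
        refine Submodule.mul_mem_mul (hmono g a ha) ?_
        have := T.hsub_mul_mem p (V := Dg g⁻¹) (W := Dg (g * h)) (hmono _ b hb) hz
        rwa [hmul, inv_mul_cancel_left] at this
      | add a _ b _ ha hb =>
        have e : T.mono p 0 0 (map_zero p) (a + b) =
            T.mono p 0 0 (map_zero p) a + T.mono p 0 0 (map_zero p) b := by
          apply Subtype.ext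
          change single 0 (T.L 0 (a + b)) = single 0 (T.L 0 a) + single 0 (T.L 0 b)
          rw [map_add, single_add]
        rw [e, add_mul]
        exact add_mem ha hb
    have h2 := key 1 (by rw [hmul, mul_inv_cancel]; exact h1)
    have e : T.mono p 0 0 (map_zero p) 1 = 1 := by
      apply Subtype.ext
      change single 0 (T.L 0 1) = 1
      rw [T.one, single_zero_one]
    rwa [e, one_mul] at h2

end Grading

end TwistData

/-- The degree-one component of `1` acts as the identity on any homogeneous element. -/
theorem one_mem_component {𝕜 D G : Type} [Field 𝕜] [DivisionRing D] [Algebra 𝕜 D] [Group G]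
    [Finite G] (Dg : G → Submodule 𝕜 D) (hind : iSupIndep Dg) (hsup : (⨆ g, Dg g) = ⊤)
    (hne : ∀ g, Dg g ≠ ⊥) (hmul : ∀ g h, Dg g * Dg h = Dg (g * h)) : (1 : D) ∈ Dg 1 := by
  classical
  have := Fintype.ofFinite G
  have hd : (1 : D) ∈ ⨆ g, Dg g := hsup ▸ trivial
  obtain ⟨x, hx, hs⟩ := (Submodule.mem_iSup_iff_exists_finsupp ..).mp hd
  rw [Finsupp.sum_fintype _ _ (fun _ => rfl)] at hs
  obtain ⟨y, hy, hy0⟩ := Submodule.exists_mem_ne_zero_of_ne_bot (hne 1)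
  rw [iSupIndep_iff_finsetSum_eq_imp_eq] at hind
  have h := hind Finset.univ (fun g => x g * y) (fun g => if g = 1 then y else 0)
    (fun g _ => ⟨by have := Submodule.mul_mem_mul (hx g) hy; rwa [hmul, mul_one] at this, by
      split_ifs with hg
      · exact hg ▸ hy
      · exact zero_mem _⟩)
    (by rw [← Finset.sum_mul, hs, one_mul]; simp) 1 (Finset.mem_univ _)
  simp only [if_true] at h
  rw [← mul_right_cancel₀ hy0 (h.trans (one_mul y).symm)]
  exact hx 1

/-! ### The cocycle and the exponent group -/

/-- The clock-and-shift matrices: for a character `χ` of `ZMod n`, the matrix `e (i, j)` sends the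
basis vector `b` to `χ (i * (b + j))` times the basis vector `b + j`. -/
noncomputable def clockShift {𝕜 D : Type} [Field 𝕜] [DivisionRing D] [Algebra 𝕜 D] (n : ℕ)
    [NeZero n] (χ : AddChar (ZMod n) 𝕜) (hχ : ∀ a, χ a = 1 → a = 0) :
    TwistData 𝕜 D (Matrix (ZMod n) (ZMod n) D) (ZMod n × ZMod n) where
  L q :=
    { toFun := fun d => Matrix.of fun a b => if a = b + q.2 then χ (q.1 * a) • d else 0
      map_add' := fun x y => by
        ext a b
        simp only [Matrix.of_apply, Matrix.add_apply]
        split_ifs <;> simp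
      map_smul' := fun t x => by
        ext a b
        simp only [Matrix.of_apply, Matrix.smul_apply, RingHom.id_apply]
        split_ifs
        · rw [smul_comm]
        · simp }
  c q q' := χ (-(q'.1 * q.2))
  inj q x y hxy := by
    have h := congrFun (congrFun hxy q.2) 0
    simp only [LinearMap.coe_mk, AddHom.coe_mk, Matrix.of_apply, zero_add, if_true] at h
    exact smul_right_injective D ((χ.val_isUnit _).ne_zero) h
  mul q q' d d' := by
    ext a b
    simp only [LinearMap.coe_mk, AddHom.coe_mk, Matrix.of_apply, Matrix.mul_apply, Prod.fst_add,
      Prod.snd_add]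
    rw [Finset.sum_eq_single (a - q.2)]
    · rw [if_pos (by ring)]
      by_cases h : a = b + (q.2 + q'.2)
      · rw [if_pos h, if_pos (by rw [h]; ring), smul_mul_smul_comm, smul_smul,
          ← AddChar.map_add_eq_mul, ← AddChar.map_add_eq_mul]
        congr 2
        ring
      · rw [if_neg h, if_neg (fun h' => h (by rw [← sub_eq_zero] at h' ⊢; rw [← h']; ring)),
          mul_zero]
    · intro k _ hk
      rw [if_neg (fun h => hk (by rw [h]; ring)), zero_mul]
    · simp
  one := by
    ext a b
    simp [Matrix.one_apply]
  c_ne q q' := (χ.val_isUnit _).ne_zero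
  nondeg q h := by
    have h1 := h (1, 0)
    have h2 := h (0, 1)
    simp only [one_mul, mul_zero, zero_mul, neg_zero, mul_one, AddChar.map_zero_eq_one] at h1 h2
    exact Prod.ext (neg_eq_zero.1 (hχ _ h2.symm)) (neg_eq_zero.1 (hχ _ h1))

/-- Reduction modulo `n` of lexicographically ordered pairs of integers. -/
def lexMod (n : ℕ) : Lex (ℤ × ℤ) →+ ZMod n × ZMod n where
  toFun γ := (((ofLex γ).1 : ZMod n), ((ofLex γ).2 : ZMod n))
  map_zero' := by simp
  map_add' a b := by simp

theorem lexMod_surjective (n : ℕ) : Function.Surjective (lexMod n) := by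
  rintro ⟨a, b⟩
  obtain ⟨a, rfl⟩ := ZMod.intCast_surjective a
  obtain ⟨b, rfl⟩ := ZMod.intCast_surjective b
  exact ⟨toLex (a, b), rfl⟩

theorem lexMod_eq_zero (n : ℕ) (γ : Lex (ℤ × ℤ)) : lexMod n γ = 0 ↔ ∃ δ, γ = n • δ := by
  constructor
  · intro h
    have h1 : (((ofLex γ).1 : ℤ) : ZMod n) = 0 := congrArg Prod.fst h
    have h2 : (((ofLex γ).2 : ℤ) : ZMod n) = 0 := congrArg Prod.snd h
    rw [ZMod.intCast_zmod_eq_zero_iff_dvd] at h1 h2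
    obtain ⟨a, ha⟩ := h1
    obtain ⟨b, hb⟩ := h2
    refine ⟨toLex (a, b), ofLex.injective (Prod.ext ?_ ?_)⟩
    · simpa using ha
    · simpa using hb
  · rintro ⟨δ, rfl⟩
    rw [map_nsmul]
    ext <;> simp

/-- The existential packaging for a ring `A` known to underlie a division ring: the algebra
structure and the grading of `A` are transported along `I.toRing = R`. -/
theorem exists_of_ring {𝕜 G A : Type} [Field 𝕜] [Group G] [R : Ring A] [Algebra 𝕜 A]
    (m : ℕ)
    (Dg : G → Submodule 𝕜 A) (h1 : iSupIndep Dg) (h2 : (⨆ g : G, Dg g) = ⊤)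
    (h3 : ∀ g : G, Dg g ≠ ⊥) (h4 : ∀ g h : G, Dg g * Dg h = Dg (g * h))
    (h5 : Module.finrank (Subring.center A) A = m)
    (I : DivisionRing A) (hI : I.toRing = R) :
    ∃ (D' : Type) (_ : DivisionRing D') (_ : Algebra 𝕜 D') (Dg' : G → Submodule 𝕜 D'),
        iSupIndep Dg' ∧ (⨆ g : G, Dg' g) = ⊤ ∧ (∀ g : G, Dg' g ≠ ⊥) ∧
        (∀ g h : G, Dg' g * Dg' h = Dg' (g * h)) ∧
        Module.finrank (Subring.center D') D' = m := by
  subst hI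
  exact ⟨A, I, _, Dg, h1, h2, h3, h4, h5⟩

/-- If a finite group `G` faithfully grades a division algebra of degree `r` over its
center (containing the algebraically closed field `𝕜` of characteristic zero), then
for every `n ≥ 1` it faithfully grades one of degree `r * n`. -/
theorem faithful_grading_enlarge_degree
    (𝕜 : Type) [Field 𝕜] [IsAlgClosed 𝕜] [CharZero 𝕜]
    (G : Type) [Group G] [Finite G] (r : ℕ)
    (hex : ∃ (D : Type) (_ : DivisionRing D) (_ : Algebra 𝕜 D)
        (Dg : G → Submodule 𝕜 D),
      iSupIndep Dg ∧ (⨆ g : G, Dg g) = ⊤ ∧ (∀ g : G, Dg g ≠ ⊥) ∧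
      (∀ g h : G, Dg g * Dg h = Dg (g * h)) ∧
      Module.finrank (Subring.center D) D = r ^ 2) :
    ∀ n : ℕ, 0 < n →
      ∃ (D' : Type) (_ : DivisionRing D') (_ : Algebra 𝕜 D')
          (Dg' : G → Submodule 𝕜 D'),
        iSupIndep Dg' ∧ (⨆ g : G, Dg' g) = ⊤ ∧ (∀ g : G, Dg' g ≠ ⊥) ∧
        (∀ g h : G, Dg' g * Dg' h = Dg' (g * h)) ∧
        Module.finrank (Subring.center D') D' = (r * n) ^ 2 := by
  intro n hn
  obtain ⟨D, _, _, Dg, h1, h2, h3, h4, h5⟩ := hex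
  rcases Nat.eq_zero_or_pos r with rfl | hr
  · -- `finrank = 0` encodes infinite dimension over the center, and `D` itself qualifies
    exact ⟨D, _, _, Dg, h1, h2, h3, h4, by rw [h5, zero_mul]⟩
  have : NeZero n := ⟨hn.ne'⟩
  have : NeZero (n : 𝕜) := ⟨Nat.cast_ne_zero.2 hn.ne'⟩
  obtain ⟨ζ, hζ⟩ := HasEnoughRootsOfUnity.exists_primitiveRoot 𝕜 n
  have hχ : ∀ a, AddChar.zmodChar n hζ.pow_eq_one a = 1 → a = 0 := by
    intro a ha
    rw [AddChar.zmodChar_apply] at ha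
    rw [← ZMod.val_eq_zero]
    exact Nat.eq_zero_of_dvd_of_lt (hζ.dvd_of_pow_eq_one _ ha) (ZMod.val_lt a)
  let T := clockShift (D := D) n _ hχ
  have : FiniteDimensional (Subring.center D) D :=
    Module.finite_of_finrank_pos (by rw [h5]; positivity)
  obtain ⟨⟨I, hI⟩, hdim⟩ := T.exists_divisionRing (lexMod n) hn (lexMod_eq_zero n)
    (lexMod_surjective n) (Module.finBasis (Subring.center D) D)
  refine exists_of_ring _ (T.comp (lexMod n) Dg) (T.comp_indep _ Dg h1)
    (T.comp_iSup _ Dg h2) (T.comp_ne_bot _ Dg h3)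
    (T.comp_mul _ Dg (one_mem_component Dg h1 h2 h3 h4) h4) ?_ I hI
  rw [hdim, Fintype.card_prod, ZMod.card, Fintype.card_fin, h5]
  ring
end

section
/- Let 𝕜 be an algebraically closed field of characteristic zero and let P, Q, R be polynomials in two variables a, b over 𝕜. If (a² − 4)·P² + b·Q² = R² in 𝕜[a,b], then P = Q = R = 0. -/
/-!
View `𝕜[a,b]` as `A[b]` with `A = 𝕜[a]` and put `d = a² - 4`.

The element `d` is not a square in the fraction field of `A`: if `d p² = r²` with `p ≠ 0`, then `p ∣ r`
because `A` is integrally closed, so `d = s²`; but `d` vanishes at `a = 2` whereas its derivative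
does not (`sq_sub_four_mul_sq`).

Given `d P² + b Q² = R²` in `A[b]`, setting `b = 0` gives `d P(0)² = R(0)²`, so `b` divides `P` and
`R`, hence `b² ∣ b Q²` and `b ∣ Q`. Dividing out `b` gives a solution of the same equation, so all
powers of `b` divide `P`, `Q`, `R`, which must then vanish (`descent`).
-/

open MvPolynomial

theorem sq_sub_four_mul_sq {𝕜 : Type*} [Field 𝕜] [CharZero 𝕜] (p r : MvPolynomial (Fin 1) 𝕜)
    (h : (X 0 ^ 2 - 4) * p ^ 2 = r ^ 2) : p = 0 := by
  by_contra hp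
  have hdvd : p ∣ r := by
    rw [← IsIntegrallyClosed.pow_dvd_pow_iff (n := 2) two_ne_zero]
    exact ⟨_, by rw [← h, mul_comm]⟩
  obtain ⟨s, rfl⟩ := hdvd
  have hs : X 0 ^ 2 - 4 = s ^ 2 := by
    apply mul_right_cancel₀ (pow_ne_zero 2 hp)
    rw [h]; ring
  have h2 : eval (fun _ => (2 : 𝕜)) s = 0 := by
    have := congrArg (eval (fun _ => (2 : 𝕜))) hs
    simp only [map_sub, map_pow, eval_X, map_ofNat] at this
    exact pow_eq_zero_iff two_ne_zero |>.1 (this.symm.trans (by norm_num))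
  have hd := congrArg (fun q => eval (fun _ => (2 : 𝕜)) (pderiv 0 q)) hs
  have h4 : pderiv 0 (4 : MvPolynomial (Fin 1) 𝕜) = 0 := pderiv_C (a := (4 : 𝕜))
  simp [Derivation.leibniz_pow, h2, h4] at hd

/-- One descent step, iterated: every power of the variable divides any solution. -/
theorem X_pow_dvd_solution {A : Type*} [CommRing A] [IsDomain A] (d : A)
    (hd : ∀ p r : A, d * p ^ 2 = r ^ 2 → p = 0) (n : ℕ) :
    ∀ P Q R : Polynomial A, Polynomial.C d * P ^ 2 + Polynomial.X * Q ^ 2 = R ^ 2 →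
      Polynomial.X ^ n ∣ P ∧ Polynomial.X ^ n ∣ Q ∧ Polynomial.X ^ n ∣ R := by
  induction n with
  | zero => simp
  | succ n ih =>
    intro P Q R h
    have h0 := congrArg (Polynomial.eval 0) h
    simp only [Polynomial.eval_add, Polynomial.eval_mul, Polynomial.eval_C, Polynomial.eval_pow,
      Polynomial.eval_X, zero_mul, add_zero] at h0
    have hP0 := hd _ _ h0
    have hR0 : R.eval 0 = 0 := by
      rw [hP0] at h0
      exact pow_eq_zero_iff two_ne_zero |>.1 (h0.symm.trans (by ring))
    obtain ⟨P', rfl⟩ : Polynomial.X ∣ P := by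
      rwa [Polynomial.X_dvd_iff, Polynomial.coeff_zero_eq_eval_zero]
    obtain ⟨R', rfl⟩ : Polynomial.X ∣ R := by
      rwa [Polynomial.X_dvd_iff, Polynomial.coeff_zero_eq_eval_zero]
    have hQ : Q ^ 2 = Polynomial.X * (R' ^ 2 - Polynomial.C d * P' ^ 2) := by
      apply mul_left_cancel₀ (Polynomial.X_ne_zero (R := A))
      linear_combination h
    obtain ⟨Q', rfl⟩ : Polynomial.X ∣ Q :=
      Polynomial.prime_X.dvd_of_dvd_pow ⟨_, hQ⟩
    have h' : Polynomial.C d * P' ^ 2 + Polynomial.X * Q' ^ 2 = R' ^ 2 := by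
      apply mul_left_cancel₀ (Polynomial.X_ne_zero (R := A))
      linear_combination hQ
    obtain ⟨h1, h2, h3⟩ := ih _ _ _ h'
    simp only [pow_succ']
    exact ⟨mul_dvd_mul_left _ h1, mul_dvd_mul_left _ h2, mul_dvd_mul_left _ h3⟩

theorem descent {A : Type*} [CommRing A] [IsDomain A] (d : A)
    (hd : ∀ p r : A, d * p ^ 2 = r ^ 2 → p = 0) (P Q R : Polynomial A)
    (h : Polynomial.C d * P ^ 2 + Polynomial.X * Q ^ 2 = R ^ 2) : P = 0 ∧ Q = 0 ∧ R = 0 := by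
  have key : ∀ S : Polynomial A, (∀ n, Polynomial.X ^ n ∣ S) → S = 0 := fun S hS => by
    ext k
    exact Polynomial.X_pow_dvd_iff.1 (hS (k + 1)) k k.lt_succ_self
  exact ⟨key _ fun n => (X_pow_dvd_solution d hd n P Q R h).1,
    key _ fun n => (X_pow_dvd_solution d hd n P Q R h).2.1,
    key _ fun n => (X_pow_dvd_solution d hd n P Q R h).2.2⟩

/-- Over an algebraically closed field `𝕜` of characteristic zero, the equation
`(a² − 4)·P² + b·Q² = R²` in the polynomial ring `𝕜[a,b]` forces `P = Q = R = 0`. -/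
theorem no_nontrivial_solution
    (𝕜 : Type*) [Field 𝕜] [IsAlgClosed 𝕜] [CharZero 𝕜]
    (P Q R : MvPolynomial (Fin 2) 𝕜)
    (h : (X 0 ^ 2 - 4) * P ^ 2 + X 1 * Q ^ 2 = R ^ 2) :
    P = 0 ∧ Q = 0 ∧ R = 0 := by
  -- `finSuccEquiv` singles out the variable with index `0`, so `a` and `b` are swapped beforehand.
  let e := (renameEquiv 𝕜 (Equiv.swap (0 : Fin 2) 1)).trans (finSuccEquiv 𝕜 1)
  have e0 : e (X 0) = Polynomial.C (X 0) := by
    simpa [e] using finSuccEquiv_X_succ (R := 𝕜) (n := 1) (j := 0)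
  have e1 : e (X 1) = Polynomial.X := by
    simpa [e] using finSuccEquiv_X_zero (R := 𝕜) (n := 1)
  have he := congrArg e h
  simp only [map_add, map_mul, map_sub, map_pow, e0, e1, map_ofNat] at he
  have := descent (X 0 ^ 2 - 4 : MvPolynomial (Fin 1) 𝕜) sq_sub_four_mul_sq (e P) (e Q) (e R)
    (by rw [map_sub, map_pow, map_ofNat]; exact he)
  simpa using this
end

section
/- Let 𝕜 be an algebraically closed field of characteristic zero, and let D be a division ring which is a 𝕜-algebra (the image of 𝕜 is central in D). Let a finite group G act on D by 𝕜-algebra automorphisms, and let D^G denote the fixed division subring {x ∈ D : g·x = x for all g ∈ G}. Then D is finite-dimensional as a left vector space over D^G, and dim_{D^G} D divides |G|. -/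
/-!
Replacing `G` by its image `H` in the automorphism group, whose order divides `|G|`, the stronger
statement `[D : D ^ H] = |H|` holds.

The inequality `≤` is Artin's argument, which works over division rings. For `≥`, it suffices that
the elements of `H` are right linearly independent over `D` as maps `D → D`
(`eq_zero_of_sum_apply_mul_eq_zero`). A shortest relation reduces to a vanishing sum `∑ b g = 0`,
where conjugation by `b g` is `g * g₀⁻¹ ∈ H`. By Schur's theorem the commutators of the `b g` have
finite order. As `𝕜` is algebraically closed, roots of unity in `D` lie in `𝕜`, so the `b g` commute
up to scalars in `𝕜`. A shortest vanishing sum of such elements has commuting terms, and each term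
has a power in the center `Z`. Kummer theory over `Z`, which contains all roots of unity, then shows
that the terms are proportional over `Z` (`sum_ne_zero_of_commutator_mem`), contradicting that they
induce distinct inner automorphisms.
-/

/-- The fixed subring `D^G` of an action `ρ` of a group `G` on a division ring `D`
by `𝕜`-algebra automorphisms. -/
def fixedSubring {𝕜 D G : Type*} [Field 𝕜] [DivisionRing D] [Algebra 𝕜 D] [Group G]
    (ρ : G →* (D ≃ₐ[𝕜] D)) : Subring D where
  carrier := {x | ∀ g : G, ρ g x = x}
  mul_mem' := fun hx hy g => by rw [map_mul, hx g, hy g]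
  one_mem' := fun g => map_one (ρ g)
  add_mem' := fun hx hy g => by rw [map_add, hx g, hy g]
  zero_mem' := fun g => map_zero (ρ g)
  neg_mem' := fun hx g => by rw [map_neg, hx g]

/-! ### Roots of unity and Kummer theory -/

/-- A root of unity in a `k`-domain is a scalar, since `X ^ n - 1` splits over `k`. -/
theorem exists_algebraMap_eq_of_pow_eq_one {k K : Type*} [Field k] [IsAlgClosed k] [Ring K]
    [IsDomain K] [Algebra k K] {x : K} {n : ℕ} (hn : 0 < n) (hx : x ^ n = 1) :
    ∃ c : k, algebraMap k K c = x := by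
  have hInt : IsIntegral k x := IsIntegral.of_pow hn (hx ▸ isIntegral_one)
  exact minpoly.mem_range_of_degree_eq_one k x
    (IsAlgClosed.degree_eq_one_of_irreducible k (minpoly.irreducible hInt))

open scoped IsMulCommutative in
/-- The Kummer step. Let commuting elements `a i` have `n`-th powers in `Z`, and let
`∑ a i = 0` be a relation for which every other `k`-linear relation has constant coefficients.
Then all `a i` are proportional over `Z`: a Galois automorphism over `Z` multiplies each
`a i` by an `n`-th root of unity in `k`, all these roots agree by hypothesis, and hence the
ratios of the `a i` are fixed by the Galois group. -/
theorem exists_algebraMap_mul_eq_of_commute {k Z D ι : Type*} [Field k] [IsAlgClosed k] [Field Z]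
    [CharZero Z] [DivisionRing D] [Algebra k Z] [Algebra Z D] [Algebra k D] [IsScalarTower k Z D]
    {n : ℕ} (hn : 0 < n) {S : Finset ι} {a : ι → D}
    (ha : ∀ i ∈ S, a i ≠ 0)
    (hpow : ∀ i ∈ S, ∃ z : Z, a i ^ n = algebraMap Z D z)
    (hcomm : ∀ i ∈ S, ∀ j ∈ S, a i * a j = a j * a i)
    (hsum : ∑ i ∈ S, a i = 0)
    (hconst : ∀ c : ι → k, ∑ i ∈ S, c i • a i = 0 → ∀ i ∈ S, ∀ j ∈ S, c i = c j)
    {i j : ι} (hi : i ∈ S) (hj : j ∈ S) : ∃ z : Z, a i = algebraMap Z D z * a j := by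
  classical
  let s : Set D := a '' S
  have hs : ∀ x ∈ s, ∀ y ∈ s, x * y = y * x := by
    rintro _ ⟨i, hi, rfl⟩ _ ⟨j, hj, rfl⟩
    exact hcomm i hi j hj
  have := Algebra.isMulCommutative_adjoin Z hs
  let E := Algebra.adjoin Z s
  have hmem : ∀ i ∈ S, a i ∈ E := fun i hi => Algebra.subset_adjoin ⟨i, hi, rfl⟩
  let b : ι → E := fun i => if h : i ∈ S then ⟨a i, hmem i h⟩ else 0
  have hb : ∀ i ∈ S, (b i : D) = a i := fun i hi => by simp [b, hi]
  have hbpow : ∀ i ∈ S, ∃ z : Z, b i ^ n = algebraMap Z E z := fun i hi => by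
    obtain ⟨z, hz⟩ := hpow i hi
    exact ⟨z, Subtype.ext (by simpa [hb i hi] using hz)⟩
  have hInt : ∀ x : E, IsIntegral Z x := by
    rintro ⟨x, hx⟩
    induction hx using Algebra.adjoin_induction with
    | mem x hx =>
      obtain ⟨i, hi, rfl⟩ := hx
      obtain ⟨z, hz⟩ := hbpow i hi
      have : IsIntegral Z (b i) := IsIntegral.of_pow hn (hz ▸ isIntegral_algebraMap)
      convert this using 1
      exact Subtype.ext (hb i hi).symm
    | algebraMap r => exact isIntegral_algebraMap (x := r)
    | add x y hx hy h1 h2 => exact h1.add h2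
    | mul x y hx hy h1 h2 => exact h1.mul h2
  have : Algebra.IsIntegral Z E := ⟨hInt⟩
  have : Algebra.IsAlgebraic Z E := inferInstance
  -- The commutative domain `E` is embedded in an algebraic closure of `Z`, where Galois theory
  -- applies.
  let Ω := AlgebraicClosure Z
  let φ : E →ₐ[Z] Ω := IsAlgClosed.lift
  have hφ : Function.Injective φ := by
    rw [injective_iff_map_eq_zero]
    intro x hx
    by_contra h0
    have hu : IsUnit x := (hInt x).isUnit h0
    exact (hu.map φ).ne_zero hx
  have hφ0 : ∀ i ∈ S, φ (b i) ≠ 0 := fun i hi h0 => ha i hi (by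
    rw [← hb i hi, (map_eq_zero_iff φ hφ).1 h0]; rfl)
  have key : φ (b i) / φ (b j) ∈ Set.range (algebraMap Z Ω) := by
    rw [InfiniteGalois.mem_range_algebraMap_iff_fixed]
    intro σ
    have hroot : ∀ l ∈ S, ∃ c : k, algebraMap k Ω c = σ (φ (b l)) / φ (b l) := fun l hl => by
      apply exists_algebraMap_eq_of_pow_eq_one hn
      obtain ⟨z, hz⟩ := hbpow l hl
      have h1 : φ (b l) ^ n = algebraMap Z Ω z := by rw [← map_pow, hz, AlgHom.commutes]
      rw [div_pow, ← map_pow, h1, AlgEquiv.commutes, div_self]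
      rw [← h1]
      exact pow_ne_zero _ (hφ0 l hl)
    choose! c hc using hroot
    have hc' : ∀ l ∈ S, σ (φ (b l)) = algebraMap k Ω (c l) * φ (b l) := fun l hl => by
      rw [hc l hl, div_mul_cancel₀ _ (hφ0 l hl)]
    have hsumb : ∑ l ∈ S, b l = 0 := Subtype.ext (by
      rw [AddSubmonoidClass.coe_finsetSum, Finset.sum_congr rfl hb, hsum]; rfl)
    have h2 : φ (∑ l ∈ S, algebraMap Z E (algebraMap k Z (c l)) * b l) = 0 := by
      rw [map_sum]
      calc _ = ∑ l ∈ S, σ (φ (b l)) := Finset.sum_congr rfl fun l hl => by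
              rw [hc' l hl, map_mul, AlgHom.commutes, ← IsScalarTower.algebraMap_apply k Z Ω]
        _ = 0 := by rw [← map_sum, ← map_sum, hsumb, map_zero, map_zero]
    have h3 := congrArg (Subtype.val) ((map_eq_zero_iff φ hφ).1 h2)
    have h4 : ∑ l ∈ S, c l • a l = 0 := by
      rw [AddSubmonoidClass.coe_finsetSum] at h3
      refine Eq.trans (Finset.sum_congr rfl fun l hl => ?_) h3
      rw [Algebra.smul_def, IsScalarTower.algebraMap_apply k Z D, ← hb l hl]
      rfl
    have h5 := hconst c h4 i hi j hj
    have hcj : algebraMap k Ω (c j) ≠ 0 := by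
      rw [hc j hj]
      exact div_ne_zero ((map_ne_zero σ).2 (hφ0 j hj)) (hφ0 j hj)
    rw [map_div₀, hc' i hi, hc' j hj, h5, mul_div_mul_left _ _ hcj]
  obtain ⟨z, hz⟩ := key
  refine ⟨z, ?_⟩
  have : b i = algebraMap Z E z * b j := hφ (by
    rw [map_mul, AlgHom.commutes, hz, div_mul_cancel₀ _ (hφ0 j hj)])
  have := congrArg Subtype.val this
  rw [hb i hi] at this
  rw [this, ← hb j hj]
  rfl

/-- Nonzero elements of `D` that are pairwise non-proportional over the central field `Z`, commute
up to scalars in `k`, and have `n`-th powers in `Z` do not sum to zero. In a shortest vanishing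
sum any `k`-linear relation has constant coefficients; conjugating by the terms shows that they
commute, and the Kummer step makes them proportional. -/
theorem sum_ne_zero_of_commutator_mem {k Z D ι : Type*} [Field k] [IsAlgClosed k] [Field Z]
    [CharZero Z] [DivisionRing D] [Algebra k Z] [Algebra Z D] [Algebra k D] [IsScalarTower k Z D]
    {n : ℕ} (hn : 0 < n) (S : Finset ι) (a : ι → D) (hS : S.Nonempty)
    (ha : ∀ i ∈ S, a i ≠ 0)
    (hpow : ∀ i ∈ S, ∃ z : Z, a i ^ n = algebraMap Z D z)
    (hcomm : ∀ i ∈ S, ∀ j ∈ S, ∃ c : k, a i * a j = c • (a j * a i))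
    (hdist : ∀ i ∈ S, ∀ j ∈ S, ∀ z : Z, a i = algebraMap Z D z * a j → i = j) :
    ∑ i ∈ S, a i ≠ 0 := by
  classical
  induction S using Finset.strongInduction generalizing a with
  | H S ih =>
  intro hsum
  -- Subtracting `c j` times the given relation kills the `j`-th term and contradicts minimality
  -- unless nothing is left.
  have hconst : ∀ c : ι → k, ∑ i ∈ S, c i • a i = 0 → ∀ i ∈ S, ∀ j ∈ S, c i = c j := by
    intro c hc i hi j hj
    by_contra hij
    let T := S.filter fun l => c l - c j ≠ 0
    have hTS : ∀ {l}, l ∈ T → l ∈ S := fun h => (Finset.mem_filter.1 h).1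
    have hT : ∀ {l}, l ∈ T → c l - c j ≠ 0 := fun h => (Finset.mem_filter.1 h).2
    refine ih T ?_ (fun l => (c l - c j) • a l) ⟨i, ?_⟩ ?_ ?_ ?_ ?_ ?_
    · exact Finset.filter_ssubset.2 ⟨j, hj, by simp⟩
    · exact Finset.mem_filter.2 ⟨hi, sub_ne_zero.2 hij⟩
    · exact fun l hl => smul_ne_zero (hT hl) (ha l (hTS hl))
    · intro l hl
      obtain ⟨z, hz⟩ := hpow l (hTS hl)
      exact ⟨(c l - c j) ^ n • z, by
        rw [smul_pow, hz, Algebra.algebraMap_eq_smul_one, Algebra.algebraMap_eq_smul_one,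
          smul_assoc]⟩
    · intro l hl m hm
      obtain ⟨d, hd⟩ := hcomm l (hTS hl) m (hTS hm)
      refine ⟨d, ?_⟩
      simp only [smul_mul_assoc, mul_smul_comm, hd]
      simp only [smul_smul]
      congr 1
      ring
    · intro l hl m hm z h
      refine hdist l (hTS hl) m (hTS hm) (((c l - c j)⁻¹ * (c m - c j)) • z) ?_
      calc a l = (c l - c j)⁻¹ • (c l - c j) • a l := (inv_smul_smul₀ (hT hl) _).symm
        _ = _ := by
          rw [h, Algebra.algebraMap_eq_smul_one, Algebra.algebraMap_eq_smul_one, smul_assoc,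
            mul_smul_comm, smul_smul, smul_mul_assoc, smul_mul_assoc, smul_mul_assoc]
    · have : ∑ l ∈ S, (c l - c j) • a l = 0 := by
        simp only [sub_smul, Finset.sum_sub_distrib, hc, ← Finset.smul_sum, hsum, smul_zero,
          sub_zero]
      rw [← this]
      refine Finset.sum_filter_of_ne fun l _ h h0 => h ?_
      rw [h0, zero_smul]
  have hcomm' : ∀ i ∈ S, ∀ j ∈ S, a i * a j = a j * a i := by
    intro i hi j hj
    have h1 : ∀ l ∈ S, ∃ c : k, a i * a l = c • (a l * a i) := hcomm i hi
    choose! c hc using h1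
    have h2 : ∑ l ∈ S, c l • a l = 0 := by
      have : (∑ l ∈ S, c l • a l) * a i = 0 := by
        rw [Finset.sum_mul]
        simp only [smul_mul_assoc]
        rw [← Finset.sum_congr rfl hc, ← Finset.mul_sum, hsum, mul_zero]
      exact (mul_eq_zero.1 this).resolve_right (ha i hi)
    have h3 : c i = 1 := by
      have h := hc i hi
      have h' : (1 - c i) • (a i * a i) = 0 := by rw [sub_smul, one_smul, ← h, sub_self]
      have := (smul_eq_zero.1 h').resolve_right (mul_ne_zero (ha i hi) (ha i hi))
      exact (sub_eq_zero.1 this).symm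
    rw [hc j hj, hconst c h2 j hj i hi, h3, one_smul]
  obtain ⟨j, hj⟩ := hS
  have hS1 : S = {j} := Finset.eq_singleton_iff_unique_mem.2 ⟨hj, fun i hi => by
    obtain ⟨z, hz⟩ := exists_algebraMap_mul_eq_of_commute hn ha hpow hcomm' hsum hconst hi hj
    exact hdist i hi j hj z hz⟩
  rw [hS1, Finset.sum_singleton] at hsum
  exact ha j hj hsum

/-! ### Inner automorphisms -/

open scoped commutatorElement in
/-- Commutators in a central-by-finite group have finite order, because there are finitely many of
them and so, by Schur's theorem, they generate a finite subgroup. -/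
theorem isOfFinOrder_commutatorElement {Γ N : Type*} [Group Γ] [Group N] [Finite N] (f : Γ →* N)
    (hf : ∀ u, f u = 1 → u ∈ Subgroup.center Γ) (u v : Γ) : IsOfFinOrder ⁅u, v⁆ := by
  have key : ∀ u u' v v' : Γ, f u = f u' → f v = f v' → ⁅u, v⁆ = ⁅u', v'⁆ := by
    intro u u' v v' hu hv
    obtain ⟨x, rfl⟩ : ∃ x, u' * x = u := ⟨u'⁻¹ * u, by group⟩
    obtain ⟨y, rfl⟩ : ∃ y, v' * y = v := ⟨v'⁻¹ * v, by group⟩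
    have hx := Subgroup.mem_center_iff.1 (hf x (by simpa using hu))
    have hy := Subgroup.mem_center_iff.1 (hf y (by simpa using hv))
    simp only [commutatorElement_def, mul_inv_rev]
    calc u' * x * (v' * y) * (x⁻¹ * u'⁻¹) * (y⁻¹ * v'⁻¹)
        = u' * (x * (v' * y)) * x⁻¹ * u'⁻¹ * y⁻¹ * v'⁻¹ := by group
      _ = u' * v' * (y * u'⁻¹) * y⁻¹ * v'⁻¹ := by rw [← hx]; group
      _ = _ := by rw [← hy]; group
  have : Finite (commutatorSet Γ) := by
    refine Set.Finite.subset (Set.finite_range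
      fun p : f.range × f.range => ⁅p.1.2.choose, p.2.2.choose⁆) ?_
    rintro _ ⟨u, v, rfl⟩
    refine ⟨(⟨f u, u, rfl⟩, ⟨f v, v, rfl⟩), key _ _ _ _ ?_ ?_⟩
    · exact (⟨u, rfl⟩ : ∃ x, f x = f u).choose_spec
    · exact (⟨v, rfl⟩ : ∃ x, f x = f v).choose_spec
  have hmem : ⁅u, v⁆ ∈ commutator Γ :=
    Subgroup.commutator_mem_commutator (Subgroup.mem_top u) (Subgroup.mem_top v)
  exact (Submonoid.isOfFinOrder_coe (H := (commutator Γ).toSubmonoid) (x := ⟨_, hmem⟩)).2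
    (isOfFinOrder_of_finite (G := commutator Γ) ⟨_, hmem⟩)

/-- Conjugation `x ↦ u * x * u⁻¹` as a homomorphism from `Dˣ` to the `k`-algebra automorphisms
of `D`. -/
def innerAut (k D : Type*) [Field k] [DivisionRing D] [Algebra k D] : Dˣ →* (D ≃ₐ[k] D) :=
  (MulSemiringAction.toAlgAut (ConjAct Dˣ) k D).comp
    (ConjAct.toConjAct : Dˣ ≃* ConjAct Dˣ).toMonoidHom

theorem innerAut_apply {k D : Type*} [Field k] [DivisionRing D] [Algebra k D] (u : Dˣ) (x : D) :
    innerAut k D u x = u * x * (u⁻¹ : Dˣ) := rfl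

theorem mem_center_of_innerAut_eq_one {k D : Type*} [Field k] [DivisionRing D] [Algebra k D]
    {u : Dˣ} (hu : innerAut k D u = 1) : (u : D) ∈ Subring.center D := by
  rw [Subring.mem_center_iff]
  intro x
  have h := DFunLike.congr_fun hu x
  rw [innerAut_apply, Units.mul_inv_eq_iff_eq_mul] at h
  exact h.symm

open scoped commutatorElement in
/-- Units inducing automorphisms in a finite group `H` commute up to a scalar in `k`: they form a
central-by-finite group, so their commutator is a root of unity. -/
theorem exists_smul_of_innerAut_mem {k D : Type*} [Field k] [IsAlgClosed k] [DivisionRing D]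
    [Algebra k D] (H : Subgroup (D ≃ₐ[k] D)) [Finite H] {u v : Dˣ} (hu : innerAut k D u ∈ H)
    (hv : innerAut k D v ∈ H) : ∃ c : k, (u * v : D) = c • (v * u : D) := by
  let Γ := H.comap (innerAut k D)
  have hfin : IsOfFinOrder ⁅(⟨u, hu⟩ : Γ), (⟨v, hv⟩ : Γ)⁆ := by
    refine isOfFinOrder_commutatorElement ((innerAut k D).subgroupComap H) (fun w hw => ?_) _ _
    have hw' : innerAut k D w = 1 := congrArg Subtype.val hw
    have := Subring.mem_center_iff.1 (mem_center_of_innerAut_eq_one hw')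
    exact Subgroup.mem_center_iff.2 fun x => Subtype.ext (Units.ext (this ((x : Dˣ) : D)))
  obtain ⟨m, hm, hpow⟩ := isOfFinOrder_iff_pow_eq_one.1 hfin
  have hpow' : ((⁅u, v⁆ : Dˣ) : D) ^ m = 1 := by
    have := congrArg (fun w : Γ => ((w : Dˣ) : D)) hpow
    simp only [SubmonoidClass.coe_pow, Units.val_pow_eq_pow_val] at this
    exact this
  obtain ⟨c, hc⟩ := exists_algebraMap_eq_of_pow_eq_one (k := k) hm hpow'
  refine ⟨c, ?_⟩
  rw [Algebra.smul_def, hc]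
  norm_cast
  rw [commutatorElement_def]
  group

/-! ### Independence of automorphisms and the degree formula -/

/-- Dedekind independence: distinct elements of a finite automorphism group are right linearly
independent over `D`. A shortest relation forces the automorphisms `g * g₀⁻¹` to be inner, induced
by the ratios `b g` of the coefficients; evaluating at `1` gives `∑ b g = 0`, which
`sum_ne_zero_of_commutator_mem` excludes. -/
theorem eq_zero_of_sum_apply_mul_eq_zero {k D : Type*} [Field k] [IsAlgClosed k] [CharZero k]
    [DivisionRing D] [Algebra k D] (H : Subgroup (D ≃ₐ[k] D)) [Finite H] (S : Finset H)
    (a : H → D) (h : ∀ x : D, ∑ g ∈ S, (g : D ≃ₐ[k] D) x * a g = 0) : ∀ g ∈ S, a g = 0 := by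
  classical
  induction S using Finset.strongInduction generalizing a with
  | H S ih =>
  by_cases hz : ∃ g ∈ S, a g = 0
  · obtain ⟨g₀, hg₀, h0⟩ := hz
    have := ih (S.erase g₀) (Finset.erase_ssubset hg₀) a fun x => by
      rw [← h x, ← Finset.add_sum_erase S _ hg₀, h0, mul_zero, zero_add]
    intro g hg
    by_cases hgg : g = g₀
    · rw [hgg, h0]
    · exact this g (Finset.mem_erase.2 ⟨hgg, hg⟩)
  push Not at hz
  rcases S.eq_empty_or_nonempty with rfl | ⟨g₀, hg₀⟩
  · simp
  exfalso
  have ha₀ := hz g₀ hg₀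
  let b : H → D := fun g => a g * (a g₀)⁻¹
  have hb : ∀ g ∈ S, b g ≠ 0 := fun g hg => mul_ne_zero (hz g hg) (inv_ne_zero ha₀)
  -- Comparing the relation at `x * y` with a right multiple of the relation at `x` eliminates `g₀`.
  have hconj : ∀ g ∈ S, ∀ y, (g : D ≃ₐ[k] D) y * b g = b g * (g₀ : D ≃ₐ[k] D) y := by
    intro g hg y
    by_cases hgg : g = g₀
    · subst hgg; simp [b, ha₀]
    have := ih (S.erase g₀) (Finset.erase_ssubset hg₀)
      (fun g => (g : D ≃ₐ[k] D) y * a g - b g * (g₀ : D ≃ₐ[k] D) y * a g₀) (fun x => by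
        have h1 : ∑ g ∈ S, (g : D ≃ₐ[k] D) x *
            ((g : D ≃ₐ[k] D) y * a g - b g * (g₀ : D ≃ₐ[k] D) y * a g₀) = 0 := by
          simp only [mul_sub, Finset.sum_sub_distrib]
          have e1 := h (x * y)
          simp only [map_mul, mul_assoc] at e1
          have e2 := congrArg (· * ((a g₀)⁻¹ * (g₀ : D ≃ₐ[k] D) y * a g₀)) (h x)
          simp only [Finset.sum_mul, zero_mul] at e2
          simp only [b, mul_assoc] at e2 ⊢
          rw [e1, e2, sub_zero]
        rw [← Finset.add_sum_erase S _ hg₀] at h1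
        simpa [b, ha₀] using h1) g (Finset.mem_erase.2 ⟨hgg, hg⟩)
    have := congrArg (· * (a g₀)⁻¹) (sub_eq_zero.1 this)
    simpa [b, mul_assoc, ha₀] using this
  -- Thus `g * g₀⁻¹` is conjugation by `b g`.
  have hinner : ∀ g (hg : g ∈ S), innerAut k D (Units.mk0 (b g) (hb g hg)) =
      ((g * g₀⁻¹ : H) : D ≃ₐ[k] D) := by
    intro g hg
    ext x
    rw [innerAut_apply, Units.mul_inv_eq_iff_eq_mul]
    have := hconj g hg ((g₀ : D ≃ₐ[k] D)⁻¹ x)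
    rw [← AlgEquiv.mul_apply, ← AlgEquiv.mul_apply, mul_inv_cancel] at this
    exact this.symm
  let : Algebra k (Subring.center D) := ((algebraMap k D).codRestrict (Subring.center D)
    fun c => Subring.mem_center_iff.2 fun x => (Algebra.commutes c x).symm).toAlgebra
  have : IsScalarTower k (Subring.center D) D := IsScalarTower.of_algebraMap_eq fun _ => rfl
  have : CharZero (Subring.center D) :=
    charZero_of_injective_algebraMap (algebraMap k (Subring.center D)).injective
  refine sum_ne_zero_of_commutator_mem (k := k) (Z := Subring.center D)
    (Nat.card_pos (α := H)) S b ⟨g₀, hg₀⟩ hb ?_ ?_ ?_ ?_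
  · intro g hg
    refine ⟨⟨b g ^ Nat.card H, ?_⟩, rfl⟩
    have : innerAut k D (Units.mk0 (b g) (hb g hg) ^ Nat.card H) = 1 := by
      rw [map_pow, hinner g hg, ← Subgroup.coe_pow, pow_card_eq_one', Subgroup.coe_one]
    simpa using mem_center_of_innerAut_eq_one this
  · intro g hg g' hg'
    exact exists_smul_of_innerAut_mem H (u := Units.mk0 _ (hb g hg)) (v := Units.mk0 _ (hb g' hg'))
      (hinner g hg ▸ SetLike.coe_mem _) (hinner g' hg' ▸ SetLike.coe_mem _)
  · intro g hg g' hg' z hzz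
    replace hzz : b g = z * b g' := hzz
    refine Subtype.ext (AlgEquiv.ext fun y => mul_right_cancel₀ (hb g hg) ?_)
    have hc := fun x => Subring.mem_center_iff.1 z.2 x
    rw [hconj g hg, hzz, mul_assoc, ← hconj g' hg', ← mul_assoc, ← hc, mul_assoc]
  · have := congrArg (· * (a g₀)⁻¹) (h 1)
    simpa [b, Finset.sum_mul] using this

/-- The degree formula `[D : D ^ H] = |H|`. The fixed division ring is given abstractly as `F` with
an embedding `ι` in `D` of image `D ^ H`, inducing the module structure. -/
theorem finrank_eq_card_of_subgroup {k D : Type*} [Field k] [IsAlgClosed k] [CharZero k]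
    [DivisionRing D] [Algebra k D] (H : Subgroup (D ≃ₐ[k] D)) [Finite H]
    (F : Type*) [DivisionRing F] [Module F D] (ι : F →+* D) (hι : ∀ (c : F) x, c • x = ι c * x)
    (hF : ∀ x, x ∈ ι.range ↔ ∀ g ∈ H, g x = x) :
    Module.Finite F D ∧ Module.finrank F D = Nat.card H := by
  classical
  have := Fintype.ofFinite H
  have hfix : ∀ (g : H) (c : F), (g : D ≃ₐ[k] D) (ι c) = ι c := fun g c =>
    (hF _).1 ⟨c, rfl⟩ g g.2
  -- Artin's argument: `F`-independent `v` give left `D`-independent vectors `(g v)_g`.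
  have hli : ∀ (s : Finset D), LinearIndepOn F id (s : Set D) → ∀ c : D → D,
      (∀ g : H, ∑ v ∈ s, c v * (g : D ≃ₐ[k] D) v = 0) → ∀ v ∈ s, c v = 0 := by
    intro s
    induction s using Finset.strongInduction with
    | H s ih =>
    intro hs c hc
    have ih' : ∀ w ∈ s, ∀ d : D → D, d w = 0 →
        (∀ g : H, ∑ v ∈ s, d v * (g : D ≃ₐ[k] D) v = 0) → ∀ v ∈ s, d v = 0 := by
      intro w hw d hd h v hv
      by_cases hvw : v = w
      · rw [hvw, hd]
      refine ih (s.erase w) (Finset.erase_ssubset hw)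
        (hs.mono (Finset.coe_subset.2 (Finset.erase_subset _ _))) d (fun g => ?_) v
        (Finset.mem_erase.2 ⟨hvw, hv⟩)
      rw [← h g, ← Finset.add_sum_erase s _ hw, hd, zero_mul, zero_add]
    intro w hw
    by_contra hw0
    let d : D → D := fun v => (c w)⁻¹ * c v
    have hd : ∀ g : H, ∑ v ∈ s, d v * (g : D ≃ₐ[k] D) v = 0 := fun g => by
      simp only [d, mul_assoc, ← Finset.mul_sum, hc g, mul_zero]
    have hdw : d w = 1 := inv_mul_cancel₀ hw0
    have hdF : ∀ v ∈ s, ∃ f : F, ι f = d v := fun v hv => (hF _).2 fun h hh => by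
      refine sub_eq_zero.1 (ih' w hw (fun v => h (d v) - d v) (by simp [hdw]) (fun g => ?_) v hv)
      simp only [sub_mul, Finset.sum_sub_distrib, hd g, sub_zero]
      have := congrArg h (hd (⟨h, hh⟩⁻¹ * g))
      rw [map_sum, map_zero] at this
      rw [← this]
      refine Finset.sum_congr rfl fun v _ => ?_
      have hg : h (((⟨h, hh⟩⁻¹ * g : H) : D ≃ₐ[k] D) v) = (g : D ≃ₐ[k] D) v :=
        h.apply_symm_apply _
      rw [map_mul h (d v), hg]
    choose! f hf using hdF
    have h0 := linearIndepOn_finset_iff.1 hs f (by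
      rw [← hd 1]
      exact Finset.sum_congr rfl fun v hv => by rw [hι, hf v hv]; rfl) w hw
    have := hf w hw
    rw [h0, map_zero, hdw] at this
    exact zero_ne_one this
  have hrank : Module.rank F D ≤ (Nat.card H : ℕ) := rank_le fun s hs => by
    have hl : LinearIndependent D fun (v : s) (g : H) => (g : D ≃ₐ[k] D) v := by
      rw [Fintype.linearIndependent_iff]
      intro c hc v
      have := hli s hs (fun v => if h : v ∈ s then c ⟨v, h⟩ else 0) (fun g => by
        rw [← Finset.sum_coe_sort]
        simpa using congrFun hc g) v v.2
      simpa using this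
    simpa [Nat.card_eq_fintype_card] using hl.fintype_card_le_finrank
  have hfinite : Module.Finite F D :=
    Module.rank_lt_aleph0_iff.1 (hrank.trans_lt Cardinal.natCast_lt_aleph0)
  refine ⟨hfinite, le_antisymm (Module.finrank_le_of_rank_le hrank) ?_⟩
  let e := Module.finBasis F D
  -- Over `Dᵐᵒᵖ`, left independence is right independence over `D`.
  have hl : LinearIndependent Dᵐᵒᵖ fun (g : H) (j : Fin (Module.finrank F D)) =>
      MulOpposite.op ((g : D ≃ₐ[k] D) (e j)) := by
    rw [Fintype.linearIndependent_iff]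
    intro c hc g
    refine MulOpposite.unop_injective (eq_zero_of_sum_apply_mul_eq_zero H Finset.univ
      (fun g => (c g).unop) (fun x => ?_) g (Finset.mem_univ g))
    have hj : ∀ j, ∑ g : H, (g : D ≃ₐ[k] D) (e j) * (c g).unop = 0 := fun j => by
      have := congrArg MulOpposite.unop (congrFun hc j)
      simpa using this
    rw [← e.sum_repr x]
    simp only [map_sum, Finset.sum_mul, hι, map_mul, hfix]
    rw [Finset.sum_comm]
    refine Finset.sum_eq_zero fun j _ => ?_
    simp only [mul_assoc, ← Finset.mul_sum, hj, mul_zero]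
  simpa [Nat.card_eq_fintype_card] using hl.fintype_card_le_finrank

/-- If a finite group `G` acts on a division ring `D` containing the algebraically
closed field `𝕜` of characteristic zero by `𝕜`-algebra automorphisms, then `D` is
finite-dimensional as a left vector space over the fixed division subring `D^G`,
of dimension dividing `|G|`. -/
theorem finrank_over_fixed_dvd_card
    (𝕜 : Type*) [Field 𝕜] [IsAlgClosed 𝕜] [CharZero 𝕜]
    (D : Type*) [DivisionRing D] [Algebra 𝕜 D]
    (G : Type*) [Group G] [Finite G]
    (ρ : G →* (D ≃ₐ[𝕜] D)) :
    Module.Finite (fixedSubring ρ) D ∧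
    Module.finrank (fixedSubring ρ) D ∣ Nat.card G := by
  let : DivisionRing (fixedSubring ρ) := DivisionRing.ofIsUnitOrEqZero fun a => by
    rw [or_iff_not_imp_right]
    intro ha
    have ha' : (a : D) ≠ 0 := fun h => ha (Subtype.ext h)
    have hinv : (a : D)⁻¹ ∈ fixedSubring ρ := fun g => by rw [map_inv₀, a.2 g]
    exact ⟨⟨a, ⟨_, hinv⟩, Subtype.ext (mul_inv_cancel₀ ha'), Subtype.ext (inv_mul_cancel₀ ha')⟩,
      rfl⟩
  have : Finite ρ.range := Set.finite_range ρ
  obtain ⟨h1, h2⟩ := finrank_eq_card_of_subgroup ρ.range (fixedSubring ρ) (fixedSubring ρ).subtype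
    (fun _ _ => rfl) (fun x => by
      rw [Subring.range_subtype]
      constructor
      · rintro hx _ ⟨g, rfl⟩
        exact hx g
      · exact fun hx g => hx _ ⟨g, rfl⟩)
  exact ⟨h1, h2 ▸ Subgroup.card_range_dvd ρ⟩
end

section
/- Let 𝕜 be an algebraically closed field of characteristic zero, and let D be a division ring which is a 𝕜-algebra (the image of 𝕜 is central in D). Let a finite group G act faithfully on D by 𝕜-algebra automorphisms (i.e. the homomorphism G → Aut_𝕜(D) is injective), and let D^G be the fixed division subring. Then dim_{D^G} D = |G|, where D is regarded as a left vector space over D^G. -/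
/-! ### The trace of an operator with scalar power -/

/-- Let `L ^ n = a ≠ 0` be scalar over a field containing a primitive `n`-th root of unity. All
eigenvalues of `L` in an algebraic closure differ from one of them, `α`, by a root of unity, so
`tr L = c α` with `c` in the ground field. Hence a nonzero trace forces `α` into the ground field,
where it is an eigenvalue. -/
lemma exists_eigenvector_of_trace_ne_zero {Z V : Type*} [Field Z] [AddCommGroup V] [Module Z V]
    [FiniteDimensional Z V] {n : ℕ} [NeZero n] {ζ : Z} (hζ : IsPrimitiveRoot ζ n)
    (L : Module.End Z V) {a : Z} (ha : a ≠ 0) (hL : L ^ n = algebraMap Z (Module.End Z V) a)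
    (ht : LinearMap.trace Z V L ≠ 0) : ∃ α : Z, ∃ v : V, v ≠ 0 ∧ L v = α • v := by
  classical
  let b := Module.finBasis Z V
  let M := LinearMap.toMatrix b b L
  let φ := algebraMap Z (AlgebraicClosure Z)
  let N := M.map φ
  have hchar : N.charpoly = L.charpoly.map φ := by
    rw [← LinearMap.charpoly_toMatrix L b, ← Matrix.charpoly_map]
  have htr : φ (LinearMap.trace Z V L) = N.charpoly.roots.sum := by
    rw [← Matrix.trace_eq_sum_roots_charpoly, LinearMap.trace_eq_matrix_trace Z b L]
    exact AddMonoidHom.map_trace (φ : Z →+ AlgebraicClosure Z) M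
  have hM : M ^ n = algebraMap Z _ a := by
    have : LinearMap.toMatrixAlgEquiv b (L ^ n) = algebraMap Z _ a := by
      rw [hL, AlgEquiv.commutes]
    rwa [map_pow] at this
  have hN : N ^ n = algebraMap (AlgebraicClosure Z) _ (φ a) := by
    have := congrArg φ.mapMatrix hM
    rw [map_pow] at this
    refine this.trans ?_
    ext i j
    by_cases hij : i = j <;> simp [Matrix.algebraMap_matrix_apply, hij]
  have hpow : ∀ β ∈ N.charpoly.roots, β ^ n = φ a := by
    intro β hβ
    have hs : β ∈ spectrum (AlgebraicClosure Z) N :=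
      Matrix.mem_spectrum_of_isRoot_charpoly (Polynomial.isRoot_of_mem_roots hβ)
    have := spectrum.pow_mem_pow N n hs
    have hne : Nontrivial (Matrix (Fin (Module.finrank Z V)) (Fin (Module.finrank Z V))
        (AlgebraicClosure Z)) := by
      by_contra hc
      rw [not_nontrivial_iff_subsingleton] at hc
      simp at hs
    rw [hN, spectrum.scalar_eq] at this
    simpa using this
  have hφ0 : φ (LinearMap.trace Z V L) ≠ 0 := by simpa using ht
  obtain ⟨α, hα⟩ : ∃ α, α ∈ N.charpoly.roots := by
    by_contra! hc
    rw [htr, Multiset.eq_zero_of_forall_notMem hc] at hφ0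
    simp at hφ0
  have hα0 : α ≠ 0 := by
    rintro rfl
    have := hpow 0 hα
    rw [zero_pow (NeZero.ne n)] at this
    exact ha (by simpa using this.symm)
  have hmul : ∀ β ∈ N.charpoly.roots, ∃ c : Z, β = φ c * α := by
    intro β hβ
    have h1 : (β / α) ^ n = 1 := by
      rw [div_pow, hpow β hβ, hpow α hα, div_self]
      simpa using ha
    obtain ⟨i, -, hi⟩ := (hζ.map_of_injective φ.injective).eq_pow_of_pow_eq_one h1
    exact ⟨ζ ^ i, by rw [map_pow, hi, div_mul_cancel₀ _ hα0]⟩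
  have hsum : ∀ s : Multiset (AlgebraicClosure Z), (∀ β ∈ s, ∃ c : Z, β = φ c * α) →
      ∃ c : Z, s.sum = φ c * α := by
    intro s
    induction s using Multiset.induction with
    | empty => exact fun _ => ⟨0, by simp⟩
    | cons β s ih =>
      intro h
      obtain ⟨c, hc⟩ := h β (by simp)
      obtain ⟨d, hd⟩ := ih fun γ hγ => h γ (by simp [hγ])
      exact ⟨c + d, by rw [Multiset.sum_cons, hc, hd, map_add, add_mul]⟩
  obtain ⟨c, hc⟩ := hsum _ hmul
  have hc0 : φ c ≠ 0 := by
    intro h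
    rw [htr, hc, h, zero_mul] at hφ0
    exact hφ0 rfl
  have hαZ : α = φ (LinearMap.trace Z V L / c) := by
    rw [map_div₀, htr, hc, mul_div_cancel_left₀ _ hc0]
  have hroot : L.charpoly.IsRoot (LinearMap.trace Z V L / c) := by
    have := Polynomial.isRoot_of_mem_roots hα
    rw [hchar, hαZ] at this
    exact Polynomial.IsRoot.of_map this φ.injective
  obtain ⟨v, hv⟩ := ((Module.End.hasEigenvalue_iff_isRoot_charpoly L _).2 hroot).exists_hasEigenvector
  exact ⟨_, v, hv.2, hv.apply_eq_smul⟩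

/-! ### Elements implementing inner automorphisms from the group -/

section Action

variable {𝕜 D G : Type*} [Field 𝕜] [DivisionRing D] [Algebra 𝕜 D] [Group G]

/-- `x` intertwines the identity with `σ`; a nonzero such `x` makes `σ` conjugation by `x`. -/
def Implements (σ : D ≃ₐ[𝕜] D) (x : D) : Prop := ∀ y, x * y = σ y * x

/-- The span, over the center of `D`, of all elements implementing an automorphism of `G`. -/
def implementedSpan (ρ : G →* (D ≃ₐ[𝕜] D)) : Submodule (Subring.center D) D :=
  Submodule.span _ {x | ∃ g, Implements (ρ g) x}

lemma Implements.mul {σ τ : D ≃ₐ[𝕜] D} {x y : D} (hx : Implements σ x) (hy : Implements τ y) :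
    Implements (σ * τ) (x * y) := fun z => by
  rw [mul_assoc, hy z, ← mul_assoc, hx, mul_assoc, AlgEquiv.mul_apply]

lemma Implements.pow {σ : D ≃ₐ[𝕜] D} {x : D} (hx : Implements σ x) (n : ℕ) :
    Implements (σ ^ n) (x ^ n) := by
  induction n with
  | zero => intro y; simp
  | succ n ih => rw [pow_succ, pow_succ]; exact ih.mul hx

lemma mem_center_of_implements_one {x : D} (hx : Implements (1 : D ≃ₐ[𝕜] D) x) :
    x ∈ Subring.center D :=
  Subring.mem_center_iff.2 fun y => (hx y).symm

/-- Two elements implementing the same automorphism are proportional over the center. -/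
lemma Implements.exists_smul {σ : D ≃ₐ[𝕜] D} {x t : D} (hx : Implements σ x)
    (ht : Implements σ t) (ht0 : t ≠ 0) : ∃ z : Subring.center D, x = z • t := by
  have hz : x * t⁻¹ ∈ Subring.center D := by
    refine Subring.mem_center_iff.2 fun y => ?_
    have h1 : t⁻¹ * y = σ.symm y * t⁻¹ := by
      rw [inv_mul_eq_iff_eq_mul₀ ht0, ← mul_assoc, ht, σ.apply_symm_apply, mul_assoc,
        mul_inv_cancel₀ ht0, mul_one]
    rw [mul_assoc x, h1, ← mul_assoc x, hx (σ.symm y), σ.apply_symm_apply, mul_assoc]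
  refine ⟨⟨_, hz⟩, ?_⟩
  rw [Subring.smul_def, smul_eq_mul, mul_assoc, inv_mul_cancel₀ ht0, mul_one]

lemma finiteDimensional_implementedSpan [Finite G] (ρ : G →* (D ≃ₐ[𝕜] D)) :
    FiniteDimensional (Subring.center D) (implementedSpan ρ) := by
  classical
  -- one nonzero implementing element for each automorphism that has one
  have h : ∀ g : G, ∃ t : D, ∀ x, Implements (ρ g) x → ∃ z : Subring.center D, x = z • t := by
    intro g
    by_cases hg : ∃ t, Implements (ρ g) t ∧ t ≠ 0
    · obtain ⟨t, ht, ht0⟩ := hg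
      exact ⟨t, fun x hx => hx.exists_smul ht ht0⟩
    · push Not at hg
      exact ⟨0, fun x hx => ⟨0, by simp [hg x hx]⟩⟩
  choose t ht using h
  have hle : implementedSpan ρ ≤ Submodule.span (Subring.center D) (Set.range t) := by
    refine Submodule.span_le.2 ?_
    rintro x ⟨g, hx⟩
    obtain ⟨z, rfl⟩ := ht g x hx
    exact Submodule.smul_mem _ _ (Submodule.subset_span ⟨g, rfl⟩)
  have := FiniteDimensional.span_of_finite (Subring.center D) (Set.finite_range t)
  exact Submodule.finiteDimensional_of_le hle

lemma mul_mem_implementedSpan (ρ : G →* (D ≃ₐ[𝕜] D)) {g : G} {u : D} (hu : Implements (ρ g) u)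
    {v : D} (hv : v ∈ implementedSpan ρ) : u * v ∈ implementedSpan ρ := by
  induction hv using Submodule.span_induction with
  | mem x hx =>
    obtain ⟨k, hk⟩ := hx
    exact Submodule.subset_span ⟨g * k, by rw [map_mul]; exact hu.mul hk⟩
  | zero => rw [mul_zero]; exact Submodule.zero_mem _
  | add x y _ _ hx hy => rw [mul_add]; exact Submodule.add_mem _ hx hy
  | smul z x _ hx => rw [mul_smul_comm]; exact Submodule.smul_mem _ _ hx

/-- Left multiplication by an implementing element, as an operator on `implementedSpan ρ`. -/
def leftMul (ρ : G →* (D ≃ₐ[𝕜] D)) {g : G} {u : D} (hu : Implements (ρ g) u) :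
    Module.End (Subring.center D) (implementedSpan ρ) :=
  (LinearMap.mulLeft (Subring.center D) u).restrict fun _ hv => mul_mem_implementedSpan ρ hu hv

lemma leftMul_apply (ρ : G →* (D ≃ₐ[𝕜] D)) {g : G} {u : D} (hu : Implements (ρ g) u)
    (v : implementedSpan ρ) : (leftMul ρ hu v : D) = u * v := rfl

/-- For `u ≠ 0` and `g ≠ 1`, the power `u ^ |G|` is central while `u` is not. Left multiplication
by `u` then has no eigenvalue in the center of the division ring `D`, so its trace vanishes. -/
lemma trace_leftMul_eq_zero [IsAlgClosed 𝕜] [CharZero 𝕜] [Finite G] (ρ : G →* (D ≃ₐ[𝕜] D))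
    (hfaith : Function.Injective ρ) {g : G} (hg : g ≠ 1) {u : D} (hu : Implements (ρ g) u) :
    LinearMap.trace (Subring.center D) (implementedSpan ρ) (leftMul ρ hu) = 0 := by
  have := finiteDimensional_implementedSpan ρ
  by_cases hu0 : u = 0
  · have : leftMul ρ hu = 0 := by
      ext v
      simp [leftMul_apply, hu0]
    rw [this, map_zero]
  by_contra ht
  have hn : NeZero (Nat.card G) := ⟨Nat.card_pos.ne'⟩
  have hn' : NeZero ((Nat.card G : ℕ) : 𝕜) := ⟨by exact_mod_cast hn.ne⟩
  obtain ⟨ζ, hζ⟩ := HasEnoughRootsOfUnity.exists_primitiveRoot 𝕜 (Nat.card G)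
  have hcen : ∀ c : 𝕜, algebraMap 𝕜 D c ∈ Subring.center D := fun c =>
    Subring.mem_center_iff.2 fun y => (Algebra.commutes c y).symm
  have hζ' : IsPrimitiveRoot (⟨algebraMap 𝕜 D ζ, hcen ζ⟩ : Subring.center D) (Nat.card G) :=
    hζ.map_of_injective (f := (algebraMap 𝕜 D).codRestrict (Subring.center D) hcen)
      (RingHom.injective _)
  have hua : u ^ Nat.card G ∈ Subring.center D := by
    have h := hu.pow (Nat.card G)
    rw [← map_pow, pow_card_eq_one', map_one] at h
    exact mem_center_of_implements_one h
  have hpow : leftMul ρ hu ^ Nat.card G = algebraMap _ _ (⟨_, hua⟩ : Subring.center D) := by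
    have : ∀ (n : ℕ) (v : implementedSpan ρ), (((leftMul ρ hu) ^ n) v : D) = u ^ n * v := by
      intro n
      induction n with
      | zero => intro v; simp
      | succ n ih => intro v; rw [pow_succ, Module.End.mul_apply, ih, leftMul_apply, pow_succ,
          mul_assoc]
    ext v
    rw [this]
    rfl
  have ha : (⟨_, hua⟩ : Subring.center D) ≠ 0 := by
    intro h
    exact pow_ne_zero _ hu0 (congrArg Subtype.val h)
  obtain ⟨α, v, hv0, hv⟩ := exists_eigenvector_of_trace_ne_zero hζ' _ ha hpow ht
  have huα : u = α := by
    have h1 : u * (v : D) = α * v := congrArg Subtype.val hv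
    exact mul_right_cancel₀ (by simpa using hv0) h1
  refine hg (hfaith ?_)
  rw [map_one]
  ext y
  have h1 := hu y
  have h2 : u * y = y * u := by
    rw [huα]
    exact (Subring.mem_center_iff.1 α.2 y).symm
  exact (mul_right_cancel₀ hu0 (h2.symm.trans h1)).symm

/-- If the sum vanished, taking traces of left multiplications on `implementedSpan ρ` would leave
only the term of `e h = 1`, which is the dimension, nonzero in characteristic zero. -/
lemma sum_ne_zero_of_implements [IsAlgClosed 𝕜] [CharZero 𝕜] [Fintype G] (ρ : G →* (D ≃ₐ[𝕜] D))
    (hfaith : Function.Injective ρ) (e : G → D) (h : G) (he : e h = 1)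
    (hi : ∀ g, Implements (ρ (g * h⁻¹)) (e g)) : ∑ g, e g ≠ 0 := by
  classical
  intro hsum
  have := finiteDimensional_implementedSpan ρ
  have hL : ∑ g, leftMul ρ (hi g) = 0 := by
    ext v
    simp [LinearMap.sum_apply, leftMul_apply, ← Finset.sum_mul, hsum]
  have ht := congrArg (LinearMap.trace (Subring.center D) (implementedSpan ρ)) hL
  rw [map_sum, map_zero, Finset.sum_eq_single h] at ht
  · have h1 : leftMul ρ (hi h) = 1 := by
      ext v
      simp [leftMul_apply, he]
    rw [h1, LinearMap.trace_one] at ht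
    have hD : CharZero D := charZero_of_injective_algebraMap (algebraMap 𝕜 D).injective
    have h2 : ((Module.finrank (Subring.center D) (implementedSpan ρ) : ℕ) : D) = 0 := by
      simpa using congrArg Subtype.val ht
    have h3 := Module.finrank_zero_iff.1 (Nat.cast_eq_zero.1 h2)
    have h4 : (1 : D) ∈ implementedSpan ρ := Submodule.subset_span ⟨1, fun y => by simp⟩
    exact one_ne_zero (congrArg Subtype.val
      (Subsingleton.elim (⟨1, h4⟩ : implementedSpan ρ) 0))
  · intro g _ hg
    exact trace_leftMul_eq_zero ρ hfaith (fun hc => hg (mul_inv_eq_one.1 hc)) (hi g)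
  · simp

/-! ### The two bounds on the dimension -/

/-- Independence of the automorphisms over `D` acting on the right. In a nonzero relation of
minimal support with `d h ≠ 0`, substituting `x * y` for `x` shows that `d g * (d h)⁻¹` implements
`g * h⁻¹`, and evaluating at `x = 1` contradicts `sum_ne_zero_of_implements`. -/
lemma automorphisms_independent [IsAlgClosed 𝕜] [CharZero 𝕜] [Fintype G] (ρ : G →* (D ≃ₐ[𝕜] D))
    (hfaith : Function.Injective ρ) (d : G → D) (hd : ∀ x, ∑ g, ρ g x * d g = 0) : d = 0 := by
  classical
  induction hk : (Finset.univ.filter fun g => d g ≠ 0).card using Nat.strong_induction_on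
    generalizing d with
  | _ k ih =>
  by_contra hne
  obtain ⟨h, hh⟩ : ∃ h, d h ≠ 0 := by
    by_contra! hc
    exact hne (funext hc)
  have key : ∀ y g, ρ g y * d g = d g * ((d h)⁻¹ * ρ h y * d h) := by
    intro y g
    let d' : G → D := fun g => ρ g y * d g - d g * ((d h)⁻¹ * ρ h y * d h)
    have hd' : ∀ x, ∑ g, ρ g x * d' g = 0 := by
      intro x
      have h1 := hd (x * y)
      have h2 := congrArg (· * ((d h)⁻¹ * ρ h y * d h)) (hd x)
      simp only [Finset.sum_mul, zero_mul] at h2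
      simp only [d', mul_sub, Finset.sum_sub_distrib]
      simp only [map_mul, mul_assoc] at h1 h2 ⊢
      rw [h1, h2, sub_zero]
    have hlt : (Finset.univ.filter fun g => d' g ≠ 0).card < k := by
      rw [← hk]
      refine Finset.card_lt_card ((Finset.ssubset_iff_of_subset ?_).2 ⟨h, ?_, ?_⟩)
      · intro g
        simp only [Finset.mem_filter, Finset.mem_univ, true_and]
        intro h1 h2
        exact h1 (by simp [d', h2])
      · simpa using hh
      · simp [d', ← mul_assoc, mul_inv_cancel₀ hh]
    exact sub_eq_zero.1 (congrFun (ih _ hlt d' hd' rfl) g)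
  refine sum_ne_zero_of_implements ρ hfaith (fun g => d g * (d h)⁻¹) h (mul_inv_cancel₀ hh)
    (fun g y => ?_) ?_
  · have h1 := key (ρ h⁻¹ y) g
    have h2 : ρ h (ρ h⁻¹ y) = y := by
      rw [← AlgEquiv.mul_apply, ← map_mul, mul_inv_cancel, map_one, AlgEquiv.one_apply]
    have h3 : ρ g (ρ h⁻¹ y) = ρ (g * h⁻¹) y := by rw [map_mul, AlgEquiv.mul_apply]
    rw [h2, h3] at h1
    rw [← mul_assoc (ρ (g * h⁻¹) y), h1]
    simp only [mul_assoc]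
    rw [mul_inv_cancel₀ hh, mul_one]
  · have := hd 1
    simp only [map_one, one_mul] at this
    rw [← Finset.sum_mul, this, zero_mul]

/-- Artin's bound. Let `y` be a left `D`-linear relation between the vectors `(g (x i))_g`. For
`c : D`, applying `h` to the `h⁻¹`-coordinate of the relation `c * y` and summing over `h` gives
`∑ i, tr (c * y i) * x i = 0`, a relation over the fixed subring. Choosing `c` with `c * y i = 1`
contradicts independence, since `tr 1 = |G| ≠ 0` in characteristic zero. -/
lemma card_le_of_linearIndependent [CharZero 𝕜] [Fintype G] (ρ : G →* (D ≃ₐ[𝕜] D))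
    {ι : Type*} [Fintype ι] (x : ι → D) (hx : LinearIndependent (fixedSubring ρ) x) :
    Fintype.card ι ≤ Fintype.card G := by
  suffices hv : LinearIndependent D (fun i (g : G) => ρ g (x i)) by
    simpa using hv.fintype_card_le_finrank
  rw [Fintype.linearIndependent_iff] at hx ⊢
  intro y hy i
  by_contra hyi
  have hy' : ∀ g, ∑ j, y j * ρ g (x j) = 0 := fun g => by simpa using congrFun hy g
  let tr : D → fixedSubring ρ := fun c => ⟨∑ h, ρ h c, fun g => by
    rw [map_sum]
    exact Fintype.sum_equiv (Equiv.mulLeft g) _ _ fun h => by simp⟩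
  have htr : ∀ c : D, (tr c : D) = ∑ h, ρ h c := fun _ => rfl
  have hrel : ∀ c : D, ∑ j, tr (c * y j) • x j = 0 := by
    intro c
    have h1 : ∀ h, ∑ j, ρ h (c * y j) * x j = 0 := by
      intro h
      have h2 := congrArg (fun z => ρ h (c * z)) (hy' h⁻¹)
      have h3 : ∀ z, ρ h (ρ h⁻¹ z) = z := fun z => by
        rw [← AlgEquiv.mul_apply, ← map_mul, mul_inv_cancel, map_one, AlgEquiv.one_apply]
      simpa only [Finset.mul_sum, map_sum, map_mul, h3, mul_zero, map_zero, mul_assoc] using h2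
    simp only [Subring.smul_def, htr, smul_eq_mul, Finset.sum_mul]
    rw [Finset.sum_comm]
    exact Finset.sum_eq_zero fun h _ => h1 h
  have h0 := congrArg Subtype.val (hx _ (hrel (y i)⁻¹) i)
  rw [inv_mul_cancel₀ hyi, htr] at h0
  have hD : CharZero D := charZero_of_injective_algebraMap (algebraMap 𝕜 D).injective
  simp at h0

/-- The fixed subring is a division ring, with its given ring structure. -/
noncomputable abbrev fixedDivisionRing (ρ : G →* (D ≃ₐ[𝕜] D)) : DivisionRing (fixedSubring ρ) :=
  DivisionRing.ofIsUnitOrEqZero fun a => by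
    by_cases ha : (a : D) = 0
    · exact Or.inr (Subtype.ext ha)
    · refine Or.inl (isUnit_iff_exists.2 ⟨⟨(a : D)⁻¹, fun g => ?_⟩, ?_, ?_⟩)
      · rw [map_inv₀, a.2 g]
      · exact Subtype.ext (mul_inv_cancel₀ ha)
      · exact Subtype.ext (inv_mul_cancel₀ ha)

end Action

/-- If a finite group `G` acts faithfully on a division ring `D` containing the
algebraically closed field `𝕜` of characteristic zero by `𝕜`-algebra automorphisms,
then `dim_{D^G} D = |G|`. -/
theorem finrank_over_fixed_eq_card
    (𝕜 : Type*) [Field 𝕜] [IsAlgClosed 𝕜] [CharZero 𝕜]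
    (D : Type*) [DivisionRing D] [Algebra 𝕜 D]
    (G : Type*) [Group G] [Finite G]
    (ρ : G →* (D ≃ₐ[𝕜] D)) (hfaith : Function.Injective ρ) :
    Module.finrank (fixedSubring ρ) D = Nat.card G := by
  classical
  have := Fintype.ofFinite G
  let _ := fixedDivisionRing ρ
  have hrank : Module.rank (fixedSubring ρ) D ≤ (Fintype.card G : ℕ) := by
    refine rank_le fun s hs => ?_
    simpa using card_le_of_linearIndependent ρ _ hs
  have hfin : Module.Finite (fixedSubring ρ) D :=
    Module.rank_lt_aleph0_iff.1 (hrank.trans_lt Cardinal.natCast_lt_aleph0)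
  rw [Nat.card_eq_fintype_card]
  refine le_antisymm (Module.finrank_le_of_rank_le hrank) ?_
  let b := Module.finBasis (fixedSubring ρ) D
  -- opposite scalars turn right `D`-linear combinations into left ones
  suffices hv : LinearIndependent Dᵐᵒᵖ
      (fun (g : G) (i : Fin (Module.finrank (fixedSubring ρ) D)) => MulOpposite.op (ρ g (b i))) by
    simpa using hv.fintype_card_le_finrank
  rw [Fintype.linearIndependent_iff]
  intro c hc g
  have hb : ∀ i, ∑ g, ρ g (b i) * (c g).unop = 0 := fun i => by
    have h1 := congrArg MulOpposite.unop (congrFun hc i)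
    simpa [Finset.unop_sum] using h1
  have h0 := automorphisms_independent ρ hfaith (fun g => (c g).unop) fun x => by
    rw [← b.sum_repr x]
    simp only [map_sum, Finset.sum_mul]
    rw [Finset.sum_comm]
    refine Finset.sum_eq_zero fun i _ => ?_
    have h2 : ∀ g, ρ g (b.repr x i • b i) = b.repr x i * ρ g (b i) := fun g => by
      rw [Subring.smul_def, smul_eq_mul, map_mul, (b.repr x i).2 g]
    simp only [h2, mul_assoc]
    rw [← Finset.mul_sum, hb, mul_zero]
  exact MulOpposite.unop_injective (congrFun h0 g)
end

section
/- Let 𝕜 be an algebraically closed field. For s = 1,…,p let Z_s be a field containing 𝕜 and let A_s be a finite-dimensional Z_s-algebra (with Z_s central in A_s), and set A = A_1 × ⋯ × A_p, a 𝕜-algebra. Let F be an algebraically closed field containing 𝕜 and let ρ : A → Mat_n(F) be an irreducible matrix representation (a 𝕜-algebra homomorphism whose image spans Mat_n(F) over F). Then n² ≤ max_s dim_{Z_s} A_s. -/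
/-!
Since the image of `ρ` spans the full matrix algebra, `ρ` sends central elements to scalar matrices.
The central idempotents `e_s` of the product sum to `1`, so for `n ≠ 0` some `ρ e_s` is a nonzero
scalar `c`; as `ρ a = c⁻¹ ρ (a e_s)`, the images of elements of the single factor `A_s` already span
`Mat_n(F)`. Elements of `Z_s` also act by scalars, so the images of a `Z_s`-basis of `A_s` span
`Mat_n(F)` over `F`, whence `n² ≤ dim_{Z_s} A_s`.
-/

/-- Central elements act by scalars under a representation whose image spans the matrix algebra. -/
theorem exists_scalar_of_central {𝕜 B F : Type*} [Field 𝕜] [Ring B] [Algebra 𝕜 B] [Field F]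
    [Algebra 𝕜 F] {n : ℕ} (ρ : B →ₐ[𝕜] Matrix (Fin n) (Fin n) F)
    (hspan : Submodule.span F (Set.range ρ) = ⊤) (z : B) (hz : ∀ b, Commute z b) :
    ∃ c : F, ρ z = c • (1 : Matrix (Fin n) (Fin n) F) := by
  have hcomm : ∀ M : Matrix (Fin n) (Fin n) F, Commute M (ρ z) := by
    intro M
    have hM : M ∈ Submodule.span F (Set.range ρ) := hspan ▸ Submodule.mem_top
    induction hM using Submodule.span_induction with
    | mem x hx =>
      obtain ⟨b, rfl⟩ := hx
      exact ((hz b).map ρ).symm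
    | zero => exact Commute.zero_left _
    | add x y _ _ hx hy => exact hx.add_left hy
    | smul c x _ hx => exact hx.smul_left c
  obtain ⟨c, hc⟩ := Matrix.mem_range_scalar_of_commute_single (M := ρ z)
    (fun i j _ => hcomm (Matrix.single i j 1))
  exact ⟨c, by rw [← hc, Matrix.scalar_apply, Matrix.smul_one_eq_diagonal]⟩

/-- If `A = A₁ × ⋯ × A_p` where each `A_s` is a finite-dimensional algebra over a field
`Z_s ⊇ 𝕜`, then every irreducible matrix representation of `A` (over an algebraically
closed field `F ⊇ 𝕜`) has dimension `n` with `n² ≤ max_s dim_{Z_s} A_s`. -/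
theorem irreducible_rep_dim_le_of_pi
    (𝕜 : Type*) [Field 𝕜] [IsAlgClosed 𝕜] (p : ℕ)
    (Z : Fin p → Type*) [∀ s, Field (Z s)] [∀ s, Algebra 𝕜 (Z s)]
    (A : Fin p → Type*) [∀ s, Ring (A s)] [∀ s, Algebra (Z s) (A s)]
    [∀ s, Algebra 𝕜 (A s)] [∀ s, IsScalarTower 𝕜 (Z s) (A s)]
    [∀ s, FiniteDimensional (Z s) (A s)]
    (F : Type*) [Field F] [Algebra 𝕜 F] [IsAlgClosed F] (n : ℕ)
    (ρ : (∀ s, A s) →ₐ[𝕜] Matrix (Fin n) (Fin n) F)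
    (hspan : Submodule.span F (Set.range ρ) = ⊤) :
    n ^ 2 ≤ Finset.univ.sup (fun s => Module.finrank (Z s) (A s)) := by
  classical
  rcases Nat.eq_zero_or_pos n with rfl | hn
  · simp
  haveI : Nonempty (Fin n) := ⟨⟨0, hn⟩⟩
  have hcentral : ∀ s (z : Z s), ∃ c : F,
      ρ (Pi.single s (algebraMap (Z s) (A s) z)) = c • (1 : Matrix (Fin n) (Fin n) F) := by
    intro s z
    refine exists_scalar_of_central ρ hspan _ fun b => ?_
    ext t
    by_cases h : t = s
    · subst h
      simpa using Algebra.commutes z (b t)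
    · simp [h]
  choose φ hφ using hcentral
  obtain ⟨s, hs⟩ : ∃ s, φ s 1 ≠ 0 := by
    by_contra! h
    have h1 : ρ (∑ s, Pi.single s (1 : A s)) = 0 := by
      rw [map_sum]
      refine Finset.sum_eq_zero fun s _ => ?_
      have := hφ s 1
      rwa [map_one, h s, zero_smul] at this
    have h2 : (∑ s, Pi.single s (1 : A s)) = 1 := Finset.univ_sum_single 1
    rw [h2, map_one] at h1
    exact one_ne_zero h1
  let b := Module.finBasis (Z s) (A s)
  let v : Fin (Module.finrank (Z s) (A s)) → Matrix (Fin n) (Fin n) F :=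
    fun i => ρ (Pi.single s (b i))
  have hfactor : ∀ x : A s, ρ (Pi.single s x) ∈ Submodule.span F (Set.range v) := by
    intro x
    have hx : (Pi.single s x : ∀ t, A t) = ∑ i,
        Pi.single s (algebraMap (Z s) (A s) (b.repr x i)) * Pi.single s (b i) := by
      conv_lhs => rw [← b.sum_repr x]
      simp_rw [← Pi.single_mul, ← Algebra.smul_def]
      exact map_sum (AddMonoidHom.single A s) _ _
    rw [hx, map_sum]
    refine Submodule.sum_mem _ fun i _ => ?_
    rw [map_mul, hφ, smul_mul_assoc, one_mul]
    exact Submodule.smul_mem _ _ (Submodule.subset_span ⟨i, rfl⟩)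
  have htop : Submodule.span F (Set.range v) = ⊤ := by
    rw [eq_top_iff, ← hspan, Submodule.span_le]
    rintro _ ⟨a, rfl⟩
    have ha : ρ (Pi.single s (a s)) = φ s 1 • ρ a := by
      have h1 : (Pi.single s (a s) : ∀ t, A t)
          = Pi.single s (algebraMap (Z s) (A s) 1) * a := by
        ext t
        by_cases h : t = s
        · subst h
          simp
        · simp [h]
      rw [h1, map_mul, hφ, smul_mul_assoc, one_mul]
    have := Submodule.smul_mem _ (φ s 1)⁻¹ (hfactor (a s))
    rwa [ha, inv_smul_smul₀ hs] at this
  have hle : n ^ 2 ≤ Module.finrank (Z s) (A s) := by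
    have := finrank_range_le_card (R := F) v
    rw [Set.finrank, htop, finrank_top, Module.finrank_matrix] at this
    simpa [sq] using this
  exact hle.trans (Finset.le_sup (f := fun s => Module.finrank (Z s) (A s)) (Finset.mem_univ s))
end

section
/- Let 𝕜 be an algebraically closed field. Let R be a commutative 𝕜-algebra whose total quotient ring is isomorphic, as a 𝕜-algebra, to a finite direct product of fields, and let A be an R-algebra (with R mapping into the center of A) that is a finitely generated torsion-free R-module. If N is a natural number such that for every algebraically closed field F containing 𝕜 every irreducible matrix representation of A over F has dimension at most N, then for every algebraically closed field F containing 𝕜 every irreducible matrix representation of the 𝕜-algebra A ⊗_𝕜 A^op over F has dimension at most N². (That is, d_*(A ⊗_𝕜 A^op) ≤ d_*(A)².) -/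
/-!
Restrict an irreducible representation `ρ` of
`A ⊗ Aᵐᵒᵖ` on `V = Fⁿ` to the two tensor factors, and let `B`, `C ⊆ End V` be the `F`-spans of the
two images. They commute elementwise and `B * C = End V`.

The algebra `B` is a full matrix algebra (`exists_algEquiv_matrix_of_commuting`): if `S ⊆ V` is a
simple `B`-submodule, then `B → End_F S` is surjective by Schur's lemma and Jacobson density, and
injective because an element of `B` killing `S` commutes with `C` and so kills `C B S = V`. Hence
`B ≃ Mat_m F`, and `A → B ≃ Mat_m F` is an irreducible representation of `A`, so `m ≤ N` and
`dim B ≤ N²`. In the same way `dim C ≤ N²`, since transposition turns irreducible representations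
of `Aᵐᵒᵖ` into irreducible representations of `A`. Therefore `n² = dim (B * C) ≤ N² * N²`.
-/

universe v w

open TensorProduct

/-- Burnside's theorem: a finite-dimensional simple module over an algebra over an algebraically
closed field realizes every linear endomorphism. -/
lemma lsmul_surjective_of_isSimpleModule (F B S : Type*) [Field F] [IsAlgClosed F] [Ring B]
    [Algebra F B] [AddCommGroup S] [Module F S] [Module B S] [IsScalarTower F B S]
    [IsSimpleModule B S] [FiniteDimensional F S] :
    Function.Surjective (Algebra.lsmul F F S : B →ₐ[F] Module.End F S) := by
  intro f
  have hS := (IsSimpleModule.algebraMap_end_bijective_of_isAlgClosed (A := B) (V := S) F).2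
  -- By Schur's lemma, an `F`-linear map is linear over the commutant of `B`.
  let g : Module.End (Module.End B S) S :=
    { toFun := f
      map_add' := f.map_add
      map_smul' := by
        intro φ s
        obtain ⟨t, rfl⟩ := hS φ
        simp }
  obtain ⟨s, hs⟩ := Module.Finite.fg_top (R := F) (M := S)
  obtain ⟨r, hr⟩ := jacobson_density g s
  refine ⟨r, LinearMap.ext_on (s := (s : Set S)) hs ?_⟩
  intro m hm
  exact (hr m hm).symm

/-- A subalgebra `B` of `End V` which together with some set `C` commuting with it
spans `End V` is a full matrix algebra. -/
lemma exists_algEquiv_matrix_of_commuting {F V : Type*} [Field F] [IsAlgClosed F]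
    [AddCommGroup V] [Module F V] [FiniteDimensional F V] [Nontrivial V]
    (B : Subalgebra F (Module.End F V)) (C : Set (Module.End F V))
    (hcomm : ∀ b ∈ B, ∀ c ∈ C, b * c = c * b)
    (hspan : Submodule.span F {x | ∃ b ∈ B, ∃ c ∈ C, x = b * c} = ⊤) :
    ∃ m : ℕ, Nonempty (B ≃ₐ[F] Matrix (Fin m) (Fin m) F) := by
  have : IsArtinian B V := isArtinian_of_tower F inferInstance
  obtain ⟨S, hS⟩ := IsAtomic.exists_atom (Submodule B V)
  have : IsSimpleModule B S := isSimpleModule_iff_isAtom.2 hS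
  have : FiniteDimensional F S :=
    inferInstanceAs (FiniteDimensional F (S.restrictScalars F))
  have hinj : Function.Injective (Algebra.lsmul F F S : B →ₐ[F] Module.End F S) := by
    rw [injective_iff_map_eq_zero]
    intro x hx
    have hxS : ∀ s ∈ S, (x : Module.End F V) s = 0 := fun s hs =>
      congrArg Subtype.val (LinearMap.congr_fun hx ⟨s, hs⟩)
    obtain ⟨s, hs, hs0⟩ := S.exists_mem_ne_zero_of_ne_bot hS.1
    have key : ∀ f : Module.End F V, (x : Module.End F V) (f s) = 0 := by
      intro f
      have hf : f ∈ Submodule.span F {x | ∃ b ∈ B, ∃ c ∈ C, x = b * c} := hspan ▸ trivial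
      induction hf using Submodule.span_induction with
      | mem f hf =>
        obtain ⟨b, hb, c, hc, rfl⟩ := hf
        rw [hcomm b hb c hc]
        have h1 := LinearMap.congr_fun (hcomm x x.2 c hc) (b s)
        have h2 : b s ∈ S := S.smul_mem ⟨b, hb⟩ hs
        simp only [Module.End.mul_apply] at h1 ⊢
        rw [h1, hxS _ h2, map_zero]
      | zero => simp
      | add f g _ _ hf hg => simp [hf, hg]
      | smul t f _ hf => simp [hf]
    ext v
    obtain ⟨f, hf⟩ := IsSimpleModule.toSpanSingleton_surjective (Module.End F V) hs0 v
    have := key f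
    simp only [LinearMap.toSpanSingleton_apply, Module.End.smul_def] at hf
    rw [hf] at this
    simpa using this
  have : Module.Free F S := Module.Free.of_divisionRing F S
  have e := AlgEquiv.ofBijective _ ⟨hinj, lsmul_surjective_of_isSimpleModule F B S⟩
  exact ⟨_, ⟨e.trans (algEquivMatrix (Module.finBasis F S))⟩⟩

/-- If the image of `σ`, together with a set `C` commuting with it, spans the matrix algebra, then
the span of the image of `σ` has dimension at most the square of the maximal dimension of an
irreducible representation of `A`. -/
lemma finrank_span_range_le {𝕜 F A : Type*} [Field 𝕜] [Field F] [IsAlgClosed F] [Algebra 𝕜 F]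
    [Ring A] [Algebra 𝕜 A] (N : ℕ)
    (hA : ∀ (n : ℕ) (ρ : A →ₐ[𝕜] Matrix (Fin n) (Fin n) F),
      Submodule.span F (Set.range ρ) = ⊤ → n ≤ N)
    {n : ℕ} [NeZero n] (σ : A →ₐ[𝕜] Matrix (Fin n) (Fin n) F) (C : Set (Matrix (Fin n) (Fin n) F))
    (hcomm : ∀ a, ∀ c ∈ C, σ a * c = c * σ a)
    (hspan : Submodule.span F {x | ∃ a, ∃ c ∈ C, x = σ a * c} = ⊤) :
    Module.finrank F (Submodule.span F (Set.range σ)) ≤ N ^ 2 := by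
  let B : Subalgebra F (Matrix (Fin n) (Fin n) F) := Algebra.adjoin F (Set.range σ)
  have hB : Subalgebra.toSubmodule B = Submodule.span F (Set.range σ) := by
    have h : (Submonoid.closure (Set.range σ) : Set (Matrix (Fin n) (Fin n) F)) = Set.range σ := by
      rw [← AlgHom.coe_range σ]
      exact congrArg SetLike.coe (Submonoid.closure_eq σ.range.toSubmonoid)
    rw [Algebra.adjoin_eq_span, h]
  have hmem : ∀ a, σ a ∈ B := fun a => Algebra.subset_adjoin ⟨a, rfl⟩
  have hcommB : ∀ b ∈ B, ∀ c ∈ C, b * c = c * b := by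
    intro b hb c hc
    rw [← Subalgebra.mem_toSubmodule, hB] at hb
    induction hb using Submodule.span_induction with
    | mem b hb => obtain ⟨a, rfl⟩ := hb; exact hcomm a c hc
    | zero => simp
    | add x y _ _ hx hy => rw [add_mul, mul_add, hx, hy]
    | smul t x _ hx => rw [smul_mul_assoc, mul_smul_comm, hx]
  let e : Matrix (Fin n) (Fin n) F ≃ₐ[F] Module.End F (Fin n → F) := Matrix.toLinAlgEquiv'
  obtain ⟨m, ⟨g⟩⟩ := exists_algEquiv_matrix_of_commuting (B.map e.toAlgHom) (e '' C)
    (by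
      rintro _ ⟨b, hb, rfl⟩ _ ⟨c, hc, rfl⟩
      simpa using congrArg e (hcommB b hb c hc))
    (by
      rw [eq_top_iff, ← LinearMap.range_eq_top.2 e.toLinearEquiv.surjective, LinearMap.range_eq_map,
        ← hspan, Submodule.map_span]
      apply Submodule.span_mono
      rintro _ ⟨_, ⟨a, c, hc, rfl⟩, rfl⟩
      exact ⟨_, ⟨_, hmem a, rfl⟩, _, ⟨c, hc, rfl⟩, map_mul e _ _⟩)
  let h : B ≃ₐ[F] Matrix (Fin m) (Fin m) F :=
    (B.equivMapOfInjective e.toAlgHom e.injective).trans g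
  let τ : A →ₐ[𝕜] Matrix (Fin m) (Fin m) F :=
    (h.toAlgHom.restrictScalars 𝕜).comp (σ.codRestrict (B.restrictScalars 𝕜) hmem)
  have hm : m ≤ N := by
    refine hA m τ (eq_top_iff.2 fun y _ => ?_)
    obtain ⟨⟨x, hx⟩, rfl⟩ := h.surjective y
    have hx' := hx
    rw [← Subalgebra.mem_toSubmodule, hB] at hx'
    induction hx' using Submodule.span_induction with
    | mem x hx' => obtain ⟨a, rfl⟩ := hx'; exact Submodule.subset_span ⟨a, rfl⟩
    | zero => exact (map_zero h).symm ▸ zero_mem _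
    | add x y hx1 hy1 ihx ihy =>
      rw [← hB] at hx1 hy1
      have := add_mem (ihx hx1 trivial) (ihy hy1 trivial)
      rwa [← map_add] at this
    | smul t x hx1 ihx =>
      rw [← hB] at hx1
      have := Submodule.smul_mem _ t (ihx hx1 trivial)
      rwa [← map_smul] at this
  rw [← hB]
  calc Module.finrank F B = Module.finrank F (Matrix (Fin m) (Fin m) F) :=
        h.toLinearEquiv.finrank_eq
    _ = m ^ 2 := by simp [Module.finrank_matrix, sq]
    _ ≤ N ^ 2 := Nat.pow_le_pow_left hm 2

lemma finrank_mul_le {F E : Type*} [Field F] [Ring E] [Algebra F E] [FiniteDimensional F E]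
    (P Q : Submodule F E) :
    Module.finrank F (P * Q : Submodule F E) ≤ Module.finrank F P * Module.finrank F Q := by
  rw [← Submodule.mulMap_range, ← Module.finrank_tensorProduct]
  exact LinearMap.finrank_range_le _

/-- Transposition turns irreducible representations of `Aᵐᵒᵖ` into irreducible representations
of `A`. -/
lemma irreducible_op_dim_le {𝕜 F A : Type*} [Field 𝕜] [Field F] [Algebra 𝕜 F]
    [Ring A] [Algebra 𝕜 A] (N : ℕ)
    (hA : ∀ (n : ℕ) (ρ : A →ₐ[𝕜] Matrix (Fin n) (Fin n) F),
      Submodule.span F (Set.range ρ) = ⊤ → n ≤ N)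
    (n : ℕ) (ρ : Aᵐᵒᵖ →ₐ[𝕜] Matrix (Fin n) (Fin n) F)
    (hρ : Submodule.span F (Set.range ρ) = ⊤) : n ≤ N := by
  let τ : A →ₐ[𝕜] Matrix (Fin n) (Fin n) F :=
    AlgHom.ofLinearMap
      ((Matrix.transposeLinearEquiv (Fin n) (Fin n) 𝕜 F).toLinearMap ∘ₗ ρ.toLinearMap ∘ₗ
        (MulOpposite.opLinearEquiv 𝕜).toLinearMap)
      (by simp) (by simp [Matrix.transpose_mul])
  refine hA n τ ?_
  have := congrArg (Submodule.map (Matrix.transposeLinearEquiv (Fin n) (Fin n) F F).toLinearMap) hρ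
  rw [Submodule.map_span, Submodule.map_top, LinearEquiv.range, ← Set.range_comp] at this
  rw [← this]
  congr 1
  ext x
  constructor
  · rintro ⟨a, rfl⟩
    exact ⟨MulOpposite.op a, rfl⟩
  · rintro ⟨a, rfl⟩
    exact ⟨a.unop, rfl⟩

/-- Let `R` be a commutative `𝕜`-algebra whose total quotient ring is a finite direct
product of fields, and let `A` be an `R`-algebra which is a finitely generated
torsion-free `R`-module. If every irreducible matrix representation of `A` over any
algebraically closed field `F ⊇ 𝕜` has dimension at most `N`, then every irreducible
matrix representation of `A ⊗_𝕜 Aᵒᵖ` has dimension at most `N²`: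
`d_*(A ⊗ Aᵒᵖ) ≤ d_*(A)²`. -/
theorem irreducible_rep_dim_le_of_tensor_op
    (𝕜 : Type*) [Field 𝕜] [IsAlgClosed 𝕜]
    (R : Type*) [CommRing R] [Algebra 𝕜 R]
    (hZ : ∃ (p : ℕ) (K : Fin p → Type w) (_ : ∀ i, Field (K i))
      (_ : ∀ i, Algebra 𝕜 (K i)),
      Nonempty (FractionRing R ≃ₐ[𝕜] (∀ i, K i)))
    (A : Type*) [Ring A] [Algebra R A] [Algebra 𝕜 A] [IsScalarTower 𝕜 R A]
    [Module.Finite R A]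
    (htf : ∀ r ∈ nonZeroDivisors R, Function.Injective (fun a : A => r • a))
    (N : ℕ)
    (hA : ∀ (F : Type v) [Field F] [Algebra 𝕜 F] [IsAlgClosed F] (n : ℕ)
      (ρ : A →ₐ[𝕜] Matrix (Fin n) (Fin n) F),
      Submodule.span F (Set.range ρ) = ⊤ → n ≤ N) :
    ∀ (F : Type v) [Field F] [Algebra 𝕜 F] [IsAlgClosed F] (n : ℕ)
      (ρ : (A ⊗[𝕜] Aᵐᵒᵖ) →ₐ[𝕜] Matrix (Fin n) (Fin n) F),
      Submodule.span F (Set.range ρ) = ⊤ → n ≤ N ^ 2 := by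
  intro F _ _ _ n ρ hρ
  rcases Nat.eq_zero_or_pos n with rfl | hn
  · exact Nat.zero_le _
  have : NeZero n := ⟨hn.ne'⟩
  let σ₁ : A →ₐ[𝕜] Matrix (Fin n) (Fin n) F := ρ.comp Algebra.TensorProduct.includeLeft
  let σ₂ : Aᵐᵒᵖ →ₐ[𝕜] Matrix (Fin n) (Fin n) F := ρ.comp Algebra.TensorProduct.includeRight
  have hmul : ∀ a b, ρ (a ⊗ₜ b) = σ₁ a * σ₂ b := by
    intro a b
    simp [σ₁, σ₂, ← map_mul]
  have hcomm : ∀ a b, σ₁ a * σ₂ b = σ₂ b * σ₁ a := by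
    intro a b
    simp [σ₁, σ₂, ← map_mul]
  have hspan : Submodule.span F {x | ∃ a, ∃ c ∈ Set.range σ₂, x = σ₁ a * c} = ⊤ := by
    rw [eq_top_iff, ← hρ, Submodule.span_le]
    rintro _ ⟨t, rfl⟩
    induction t using TensorProduct.induction_on with
    | zero => simp
    | tmul a b => exact Submodule.subset_span ⟨a, _, ⟨b, rfl⟩, hmul a b⟩
    | add x y hx hy => rw [map_add]; exact add_mem hx hy
  have h₁ := finrank_span_range_le N (fun n ρ => hA F n ρ) σ₁ (Set.range σ₂)
    (by rintro a _ ⟨b, rfl⟩; exact hcomm a b) hspan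
  have h₂ := finrank_span_range_le N (irreducible_op_dim_le N (fun n ρ => hA F n ρ)) σ₂
    (Set.range σ₁) (by rintro b _ ⟨a, rfl⟩; exact (hcomm a b).symm) (by
      rw [← hspan]
      congr 1
      ext x
      constructor
      · rintro ⟨b, _, ⟨a, rfl⟩, rfl⟩
        exact ⟨a, _, ⟨b, rfl⟩, (hcomm a b).symm⟩
      · rintro ⟨a, _, ⟨b, rfl⟩, rfl⟩
        exact ⟨b, _, ⟨a, rfl⟩, hcomm a b⟩)
  have htop : Submodule.span F (Set.range σ₁) * Submodule.span F (Set.range σ₂) = ⊤ := by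
    rw [Submodule.span_mul_span, eq_top_iff, ← hspan]
    apply Submodule.span_mono
    rintro _ ⟨a, c, hc, rfl⟩
    exact Set.mul_mem_mul ⟨a, rfl⟩ hc
  have h := finrank_mul_le (Submodule.span F (Set.range σ₁)) (Submodule.span F (Set.range σ₂))
  rw [htop, finrank_top] at h
  have h' : n ^ 2 ≤ (N ^ 2) ^ 2 := by
    calc n ^ 2 = Module.finrank F (Matrix (Fin n) (Fin n) F) := by
          simp [Module.finrank_matrix, sq]
      _ ≤ _ := h
      _ ≤ N ^ 2 * N ^ 2 := Nat.mul_le_mul h₁ h₂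
      _ = (N ^ 2) ^ 2 := (sq _).symm
  exact (Nat.pow_le_pow_iff_left two_ne_zero).1 h'
end

section
/- Let ℍ be the algebra of real quaternions and let G be a subgroup of the unit group ℍˣ containing two elements that do not commute. Let G act on ℍ by conjugation, x ↦ gxg⁻¹. Then the fixed subring ℍ^G = {x ∈ ℍ : gxg⁻¹ = x for all g ∈ G} equals ℝ·1 (the real scalars); consequently dim_{ℍ^G} ℍ = 4. In particular, for any such finite group G with |G| > 4 (e.g. the rotation group of a platonic solid inside SU(2) ⊂ ℍˣ), one has dim_{ℍ^G} ℍ = 4 < |G|. -/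
/-!
The proof rests on the fact that two quaternions commute exactly when the cross product of their
imaginary parts vanishes, i.e. when these are parallel vectors of `ℝ³`. A quaternion commuting with
two non-commuting elements `g`, `h` has imaginary part parallel to two linearly independent
vectors, so it is real (`im_eq_zero_of_commute`). Hence `ℍ^G = ℝ·1` (`quatFixed_eq_range`), and the
dimension of `ℍ` over `ℍ^G` is its real dimension, transported along `ℝ ≃ ℍ^G`.
-/

/-- The fixed subring `ℍ^G` of the conjugation action of a subgroup `G ≤ ℍˣ`
on the real quaternions `ℍ`. -/
def quatFixed (G : Subgroup (Quaternion ℝ)ˣ) : Subring (Quaternion ℝ) where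
  carrier := {x | ∀ g ∈ G, (g : Quaternion ℝ) * x * ((g⁻¹ : (Quaternion ℝ)ˣ) : Quaternion ℝ) = x}
  one_mem' := by intro g hg; simp
  mul_mem' := by
    intro x y hx hy g hg
    have h1 : ((g⁻¹ : (Quaternion ℝ)ˣ) : Quaternion ℝ) * g = 1 := by
      rw [← Units.val_mul, inv_mul_cancel, Units.val_one]
    have h2 : ∀ z : Quaternion ℝ,
        ((g⁻¹ : (Quaternion ℝ)ˣ) : Quaternion ℝ) * ((g : Quaternion ℝ) * z) = z := by
      intro z; rw [← mul_assoc, h1, one_mul]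
    conv_rhs => rw [← hx g hg, ← hy g hg]
    simp [mul_assoc, h2]
  add_mem' := by
    intro x y hx hy g hg
    simp only [mul_add, add_mul]
    rw [hx g hg, hy g hg]
  zero_mem' := by intro g hg; simp
  neg_mem' := by
    intro x hx g hg
    simp only [mul_neg, neg_mul]
    rw [hx g hg]

theorem quaternion_commute_iff (a b : Quaternion ℝ) :
    a * b = b * a ↔ a.imJ * b.imK = a.imK * b.imJ ∧ a.imK * b.imI = a.imI * b.imK ∧
      a.imI * b.imJ = a.imJ * b.imI := by
  rw [Quaternion.ext_iff]
  simp only [Quaternion.re_mul, Quaternion.imI_mul, Quaternion.imJ_mul, Quaternion.imK_mul]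
  constructor
  · rintro ⟨-, h1, h2, h3⟩
    refine ⟨?_, ?_, ?_⟩ <;> linarith
  · rintro ⟨h1, h2, h3⟩
    refine ⟨?_, ?_, ?_, ?_⟩ <;> linarith

/-- A nonzero imaginary part of `x` would be parallel to those of both `g` and `h`, which would
then be parallel to each other. -/
theorem im_eq_zero_of_commute {g h x : Quaternion ℝ} (hg : g * x = x * g) (hh : h * x = x * h)
    (hgh : g * h ≠ h * g) : x.imI = 0 ∧ x.imJ = 0 ∧ x.imK = 0 := by
  rw [quaternion_commute_iff] at hg hh
  obtain ⟨g1, g2, g3⟩ := hg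
  obtain ⟨h1, h2, h3⟩ := hh
  -- Each coordinate of `x` multiplied by each coordinate of the cross product of `g` and `h` is a
  -- combination of the coordinates of the cross products with `x`.
  refine ⟨?_, ?_, ?_⟩ <;> by_contra hx <;>
    refine hgh ((quaternion_commute_iff g h).2 ⟨?_, ?_, ?_⟩) <;>
    apply mul_left_cancel₀ hx <;> grind

theorem quatFixed_eq_range (G : Subgroup (Quaternion ℝ)ˣ)
    (hnc : ∃ g ∈ G, ∃ h ∈ G, g * h ≠ h * g) :
    (quatFixed G : Set (Quaternion ℝ)) = Set.range (algebraMap ℝ (Quaternion ℝ)) := by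
  obtain ⟨g, hg, h, hh, hgh⟩ := hnc
  ext x
  constructor
  · intro hx
    have hcomm : ∀ u ∈ G, (u : Quaternion ℝ) * x = x * u := fun u hu =>
      (Units.mul_inv_eq_iff_eq_mul u).1 (hx u hu)
    obtain ⟨h1, h2, h3⟩ := im_eq_zero_of_commute (hcomm g hg) (hcomm h hh)
      (fun e => hgh (Units.ext e))
    refine ⟨x.re, ?_⟩
    ext <;> simp [Quaternion.algebraMap_def, h1, h2, h3]
  · rintro ⟨r, rfl⟩ u _
    rw [← Algebra.commutes, mul_assoc, Units.mul_inv, mul_one]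

/-- If `G ≤ ℍˣ` contains two non-commuting elements and acts on `ℍ` by conjugation,
then the fixed subring `ℍ^G` is exactly the real scalars `ℝ·1`, so `dim_{ℍ^G} ℍ = 4`;
in particular, if `G` is finite with `|G| > 4` then `dim_{ℍ^G} ℍ = 4 < |G|`. -/
theorem quaternion_fixed_subring_eq_real
    (G : Subgroup (Quaternion ℝ)ˣ)
    (hnc : ∃ g ∈ G, ∃ h ∈ G, g * h ≠ h * g) :
    ((quatFixed G : Set (Quaternion ℝ)) = Set.range (algebraMap ℝ (Quaternion ℝ))) ∧
    Module.finrank (quatFixed G) (Quaternion ℝ) = 4 ∧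
    (Finite G → 4 < Nat.card G →
      Module.finrank (quatFixed G) (Quaternion ℝ) < Nat.card G) := by
  have hfix := quatFixed_eq_range G hnc
  have hrank : Module.finrank (quatFixed G) (Quaternion ℝ) = 4 := by
    -- Restrict the codomain of `algebraMap` to get a bijection `ℝ → ℍ^G` compatible with scalar
    -- multiplication on `ℍ`.
    let i : ℝ → quatFixed G := fun r =>
      ⟨algebraMap ℝ (Quaternion ℝ) r, by
        rw [← SetLike.mem_coe, hfix]; exact ⟨r, rfl⟩⟩
    have hi : Function.Bijective i := by
      constructor
      · intro r s hrs
        exact (algebraMap ℝ (Quaternion ℝ)).injective (congrArg Subtype.val hrs)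
      · rintro ⟨x, hx⟩
        rw [← SetLike.mem_coe, hfix] at hx
        obtain ⟨r, rfl⟩ := hx
        exact ⟨r, rfl⟩
    have h := rank_eq_of_equiv_equiv (R := ℝ) (R' := quatFixed G) (M := Quaternion ℝ)
      (M₁ := Quaternion ℝ) i (AddEquiv.refl _) hi
      (fun r m => Algebra.smul_def r m)
    rw [Module.finrank, ← h]
    exact Quaternion.finrank_eq_four
  exact ⟨hfix, hrank, fun _ hcard => hrank ▸ hcard⟩
end
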